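/- arXiv:2201.11145 — 3 statements merged into one kernel-verified Lean document; each statement's English description precedes it below -/
import Mathlib

section
/- For every nonnegative integer k there exist constants c_k > 0 and x_k > 0, independent of χ₁, χ₂ and w, such that for all integers q₁, q₂ > 1, all primitive quadratic Dirichlet characters χ₁ mod q₁ and χ₂ mod q₂, every real number w, and every real x ≥ x_k, one has A_k(x,w) ≥ c_k·x^k. -/
open Finset

/-- The Dirichlet series coefficients of
`f(s) = ζ(s) L(s,χ₁) L(s,χ₂) L(s,χ₁χ₂)`, given explicitly by
`a n = Σ_{j k l m = n} χ₁(k) χ₂(l) χ₁(m) χ₂(m)`. -/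
noncomputable def goldfeldCoeff {q₁ q₂ : ℕ} (χ₁ : DirichletCharacter ℂ q₁)
    (χ₂ : DirichletCharacter ℂ q₂) (n : ℕ) : ℂ :=
  ∑ p ∈ n.divisorsAntidiagonal, ∑ r ∈ p.2.divisorsAntidiagonal,
    ∑ t ∈ r.2.divisorsAntidiagonal,
      χ₁ (r.1 : ZMod q₁) * χ₂ (t.1 : ZMod q₂) * χ₁ (t.2 : ZMod q₁) * χ₂ (t.2 : ZMod q₂)

/-- `A₀(x,w) = Σ_{n ≤ x} a n * n ^ (-w)` and `A_{k+1}(x,w) = ∫₀ˣ A_k(y,w) dy`. -/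
noncomputable def goldfeldA {q₁ q₂ : ℕ} (χ₁ : DirichletCharacter ℂ q₁)
    (χ₂ : DirichletCharacter ℂ q₂) : ℕ → ℝ → ℝ → ℂ
  | 0, x, w => ∑ n ∈ Icc 1 ⌊x⌋₊, goldfeldCoeff χ₁ χ₂ n * (((n : ℝ) ^ (-w) : ℝ) : ℂ)
  | (k + 1), x, w => ∫ y in (0:ℝ)..x, goldfeldA χ₁ χ₂ k y w

/-!
The negated logarithmic derivative of `f(s)` has the coefficients `Λ(n) (1 + χ₁(n)) (1 + χ₂(n))`,
which are nonnegative for quadratic characters. Multiplying it by `f` and comparing coefficients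
expresses `a n * log n` as a combination of the `a m` with `m < n` with nonnegative weights, so all
`a n` are nonnegative. As `a 1 = 1`, the sum `A₀` is nonnegative on `[0, ∞)` and at least `1` on
`[1, ∞)`; integrating `k` times from `0` gives `A_k(x, w) ≥ (x - 1) ^ k / k!` for `x ≥ 1`, and
`x - 1 ≥ x / 2` once `x ≥ 2`.
-/

section LogDerivation

open scoped ArithmeticFunction.zeta ArithmeticFunction.vonMangoldt

variable {R : Type*} [CommSemiring R]

/-- The twist of an arithmetic function by a completely multiplicative function `ψ`. The value `ψ 0`
is irrelevant, so that the characters modulo `1`, which do not vanish at `0`, are covered. -/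
def dirichletTwist (ψ : ℕ →* R) (f : ArithmeticFunction R) : ArithmeticFunction R :=
  ⟨fun n ↦ ψ n * f n, by simp⟩

@[simp]
lemma dirichletTwist_apply (ψ : ℕ →* R) (f : ArithmeticFunction R) (n : ℕ) :
    dirichletTwist ψ f n = ψ n * f n := rfl

lemma dirichletTwist_mul (ψ : ℕ →* R) (f g : ArithmeticFunction R) :
    dirichletTwist ψ (f * g) = dirichletTwist ψ f * dirichletTwist ψ g := by
  ext n
  simp only [dirichletTwist_apply, ArithmeticFunction.mul_apply, mul_sum]
  refine sum_congr rfl fun p hp ↦ ?_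
  rw [← (Nat.mem_divisorsAntidiagonal.mp hp).1, map_mul, mul_mul_mul_comm]

lemma dirichletTwist_zeta_apply (ψ : ℕ →* R) {n : ℕ} (hn : n ≠ 0) :
    dirichletTwist ψ (ζ : ArithmeticFunction R) n = ψ n := by
  simp [hn]

variable [Algebra ℝ R]

/-- The operator `f ↦ log · f`, a derivation for Dirichlet convolution; on Dirichlet series it is
the negated derivative in `s`. -/
noncomputable def logDerivation (f : ArithmeticFunction R) : ArithmeticFunction R :=
  ⟨fun n ↦ Real.log n • f n, by simp⟩

@[simp]
lemma logDerivation_apply (f : ArithmeticFunction R) (n : ℕ) :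
    logDerivation f n = Real.log n • f n := rfl

lemma logDerivation_mul (f g : ArithmeticFunction R) :
    logDerivation (f * g) = logDerivation f * g + f * logDerivation g := by
  ext n
  simp only [logDerivation_apply, ArithmeticFunction.add_apply, ArithmeticFunction.mul_apply,
    smul_sum, ← sum_add_distrib]
  refine sum_congr rfl fun p hp ↦ ?_
  obtain ⟨h₁, h₂⟩ := Nat.ne_zero_of_mem_divisorsAntidiagonal hp
  rw [← (Nat.mem_divisorsAntidiagonal.mp hp).1, Nat.cast_mul,
    Real.log_mul (Nat.cast_ne_zero.mpr h₁) (Nat.cast_ne_zero.mpr h₂), add_smul,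
    smul_mul_assoc, mul_smul_comm]

lemma logDerivation_mul_of_eq_mul {f g F G : ArithmeticFunction R}
    (hf : logDerivation f = F * f) (hg : logDerivation g = G * g) :
    logDerivation (f * g) = (F + G) * (f * g) := by
  rw [logDerivation_mul, hf, hg]
  ring

lemma logDerivation_dirichletTwist (ψ : ℕ →* R) (f : ArithmeticFunction R) :
    logDerivation (dirichletTwist ψ f) = dirichletTwist ψ (logDerivation f) := by
  ext n
  simp

variable (R) in
/-- The von Mangoldt function with values in a real algebra. -/
noncomputable def vonMangoldtIn : ArithmeticFunction R :=
  ⟨fun n ↦ algebraMap ℝ R (Λ n), by simp⟩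

@[simp]
lemma vonMangoldtIn_apply (n : ℕ) : vonMangoldtIn R n = algebraMap ℝ R (Λ n) := rfl

lemma logDerivation_zeta :
    logDerivation (ζ : ArithmeticFunction R) = vonMangoldtIn R * ζ := by
  ext n
  rw [ArithmeticFunction.coe_mul_zeta_apply]
  simp only [vonMangoldtIn_apply, ← map_sum, ArithmeticFunction.vonMangoldt_sum]
  rcases eq_or_ne n 0 with rfl | hn
  · simp
  · simp [hn, Algebra.algebraMap_eq_smul_one]

lemma logDerivation_dirichletTwist_zeta (ψ : ℕ →* R) :
    logDerivation (dirichletTwist ψ ζ) =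
      dirichletTwist ψ (vonMangoldtIn R) * dirichletTwist ψ ζ := by
  rw [logDerivation_dirichletTwist, logDerivation_zeta, dirichletTwist_mul]

lemma nonneg_of_logDerivation_eq_mul [PartialOrder R] [IsOrderedRing R] [PosSMulReflectLE ℝ R]
    {f F : ArithmeticFunction R} (hf : logDerivation f = F * f) (hf₁ : 0 ≤ f 1)
    (hF₁ : F 1 = 0) (hF : ∀ n, 0 ≤ F n) (n : ℕ) : 0 ≤ f n := by
  induction n using Nat.strong_induction_on with
  | h n ih =>
    obtain hn | hn := le_or_gt n 1
    · interval_cases n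
      exacts [f.map_zero.ge, hf₁]
    have log_pos : 0 < Real.log n := Real.log_pos (by exact_mod_cast hn)
    have log_smul_nonneg : 0 ≤ Real.log n • f n := by
      rw [← logDerivation_apply, hf, ArithmeticFunction.mul_apply]
      refine sum_nonneg fun p hp ↦ ?_
      rcases eq_or_ne p.1 1 with hp₁ | hp₁
      · rw [hp₁, hF₁, zero_mul]
      · have hp₂ : p.2 < n := by
          obtain ⟨rfl, h⟩ := Nat.mem_divisorsAntidiagonal.mp hp
          obtain ⟨h₁, h₂⟩ := mul_ne_zero_iff.mp h
          exact lt_mul_of_one_lt_left (by lia) (by lia)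
        exact mul_nonneg (hF _) (ih _ hp₂)
    exact le_of_smul_le_smul_left (by simpa using log_smul_nonneg) log_pos

end LogDerivation

section Coefficients

open scoped ComplexOrder ArithmeticFunction.zeta

variable {q₁ q₂ : ℕ} {χ₁ : DirichletCharacter ℂ q₁} {χ₂ : DirichletCharacter ℂ q₂}

/-- A Dirichlet character as a completely multiplicative function on the natural numbers. -/
noncomputable def natDirichletCharacter {q : ℕ} (χ : DirichletCharacter ℂ q) : ℕ →* ℂ :=
  χ.toMonoidHom.comp (Nat.castRingHom (ZMod q))

@[simp]
lemma natDirichletCharacter_apply {q : ℕ} (χ : DirichletCharacter ℂ q) (n : ℕ) :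
    natDirichletCharacter χ n = χ n := rfl

variable (χ₁ χ₂) in
/-- The arithmetic function whose Dirichlet series is `ζ(s) L(s,χ₁) L(s,χ₂) L(s,χ₁χ₂)`. -/
noncomputable def goldfeldProduct : ArithmeticFunction ℂ :=
  ζ * (dirichletTwist (natDirichletCharacter χ₁) ζ *
    (dirichletTwist (natDirichletCharacter χ₂) ζ *
      dirichletTwist (natDirichletCharacter χ₁ * natDirichletCharacter χ₂) ζ))

lemma goldfeldProduct_apply (n : ℕ) : goldfeldProduct χ₁ χ₂ n = goldfeldCoeff χ₁ χ₂ n := by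
  rw [goldfeldProduct, ArithmeticFunction.mul_apply]
  refine sum_congr rfl fun p hp ↦ ?_
  have hp₁ := (Nat.ne_zero_of_mem_divisorsAntidiagonal hp).1
  rw [ArithmeticFunction.natCoe_apply, ArithmeticFunction.zeta_apply_ne hp₁, Nat.cast_one,
    one_mul, ArithmeticFunction.mul_apply]
  refine sum_congr rfl fun r hr ↦ ?_
  have hr₁ := (Nat.ne_zero_of_mem_divisorsAntidiagonal hr).1
  rw [dirichletTwist_zeta_apply _ hr₁, ArithmeticFunction.mul_apply, mul_sum]
  refine sum_congr rfl fun t ht ↦ ?_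
  obtain ⟨ht₁, ht₂⟩ := Nat.ne_zero_of_mem_divisorsAntidiagonal ht
  rw [dirichletTwist_zeta_apply _ ht₁, dirichletTwist_zeta_apply _ ht₂]
  simp only [natDirichletCharacter_apply, MonoidHom.mul_apply, mul_assoc]

variable (χ₁ χ₂) in
/-- The von Mangoldt function of `ζ(s) L(s,χ₁) L(s,χ₂) L(s,χ₁χ₂)`: the coefficients of the negated
logarithmic derivative. -/
noncomputable def goldfeldVonMangoldt : ArithmeticFunction ℂ :=
  vonMangoldtIn ℂ + (dirichletTwist (natDirichletCharacter χ₁) (vonMangoldtIn ℂ) +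
    (dirichletTwist (natDirichletCharacter χ₂) (vonMangoldtIn ℂ) +
      dirichletTwist (natDirichletCharacter χ₁ * natDirichletCharacter χ₂) (vonMangoldtIn ℂ)))

lemma goldfeldVonMangoldt_apply (n : ℕ) :
    goldfeldVonMangoldt χ₁ χ₂ n =
      (1 + χ₁ n) * (1 + χ₂ n) * (ArithmeticFunction.vonMangoldt n : ℂ) := by
  simp only [goldfeldVonMangoldt, ArithmeticFunction.add_apply, dirichletTwist_apply,
    vonMangoldtIn_apply, MonoidHom.mul_apply, natDirichletCharacter_apply, Complex.coe_algebraMap]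
  ring

lemma logDerivation_goldfeldProduct :
    logDerivation (goldfeldProduct χ₁ χ₂) =
      goldfeldVonMangoldt χ₁ χ₂ * goldfeldProduct χ₁ χ₂ :=
  logDerivation_mul_of_eq_mul logDerivation_zeta <|
    logDerivation_mul_of_eq_mul (logDerivation_dirichletTwist_zeta _) <|
      logDerivation_mul_of_eq_mul (logDerivation_dirichletTwist_zeta _)
        (logDerivation_dirichletTwist_zeta _)

lemma goldfeldCoeff_one : goldfeldCoeff χ₁ χ₂ 1 = 1 := by
  simp [goldfeldCoeff]

lemma goldfeldCoeff_nonneg (hχ : ∀ n : ℕ, 0 ≤ (1 + χ₁ n) * (1 + χ₂ n)) (n : ℕ) :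
    0 ≤ goldfeldCoeff χ₁ χ₂ n := by
  rw [← goldfeldProduct_apply]
  refine nonneg_of_logDerivation_eq_mul logDerivation_goldfeldProduct ?_ ?_ (fun m ↦ ?_) n
  · rw [goldfeldProduct_apply, goldfeldCoeff_one]
    exact zero_le_one
  · simp [goldfeldVonMangoldt_apply]
  · rw [goldfeldVonMangoldt_apply]
    exact mul_nonneg (hχ m) (mod_cast ArithmeticFunction.vonMangoldt_nonneg)

lemma one_add_nonneg_of_sq_eq_one {q : ℕ} {χ : DirichletCharacter ℂ q} (hχ : χ ^ 2 = 1)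
    (a : ZMod q) : 0 ≤ 1 + χ a := by
  rcases MulChar.isQuadratic_iff_sq_eq_one.mpr hχ a with h | h | h <;> norm_num [h]

lemma one_add_mul_one_add_nonneg (h₁ : χ₁ ^ 2 = 1) (h₂ : χ₂ ^ 2 = 1) (n : ℕ) :
    0 ≤ (1 + χ₁ n) * (1 + χ₂ n) :=
  mul_nonneg (one_add_nonneg_of_sq_eq_one h₁ n) (one_add_nonneg_of_sq_eq_one h₂ n)

end Coefficients

section SummatoryFunction

variable {b : ℕ → ℝ}

lemma monotone_sum_Icc_one_floor (hb : ∀ n, 0 ≤ b n) :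
    Monotone fun x : ℝ ↦ ∑ n ∈ Icc 1 ⌊x⌋₊, b n := fun _ _ hxy ↦
  sum_le_sum_of_subset_of_nonneg (Icc_subset_Icc_right (Nat.floor_mono hxy)) fun n _ _ ↦ hb n

lemma apply_one_le_sum_Icc_one_floor (hb : ∀ n, 0 ≤ b n) {x : ℝ} (hx : 1 ≤ x) :
    b 1 ≤ ∑ n ∈ Icc 1 ⌊x⌋₊, b n :=
  single_le_sum (fun n _ ↦ hb n) (mem_Icc.mpr ⟨le_rfl, Nat.one_le_floor_iff x |>.mpr hx⟩)

end SummatoryFunction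

section IteratedPrimitive

open MeasureTheory

/-- The `k`-fold iterated primitive of `f` based at `0`. -/
noncomputable def iteratedPrimitive (f : ℝ → ℝ) : ℕ → ℝ → ℝ
  | 0 => f
  | k + 1 => fun x ↦ ∫ y in (0 : ℝ)..x, iteratedPrimitive f k y

variable {f : ℝ → ℝ}

lemma intervalIntegrable_iteratedPrimitive (hf : ∀ a b, IntervalIntegrable f volume a b) (k : ℕ) :
    ∀ a b, IntervalIntegrable (iteratedPrimitive f k) volume a b := by
  induction k with
  | zero => exact hf
  | succ k ih => exact (intervalIntegral.continuous_primitive ih 0).intervalIntegrable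

lemma iteratedPrimitive_nonneg (hf : ∀ x, 0 ≤ x → 0 ≤ f x) (k : ℕ) {x : ℝ} (hx : 0 ≤ x) :
    0 ≤ iteratedPrimitive f k x := by
  induction k generalizing x with
  | zero => exact hf x hx
  | succ k ih => exact intervalIntegral.integral_nonneg hx fun y hy ↦ ih hy.1

lemma integral_sub_pow_div_factorial (a x : ℝ) (k : ℕ) :
    ∫ y in a..x, (y - a) ^ k / (k.factorial : ℝ) =
      (x - a) ^ (k + 1) / ((k + 1).factorial : ℝ) := by
  rw [intervalIntegral.integral_div, intervalIntegral.integral_comp_sub_right (fun y ↦ y ^ k) a,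
    integral_pow, sub_self, zero_pow k.succ_ne_zero, sub_zero, div_div, Nat.factorial_succ]
  push_cast
  rfl

lemma mul_sub_pow_div_factorial_le_iteratedPrimitive
    (hf : ∀ a b, IntervalIntegrable f volume a b) (hf₀ : ∀ x, 0 ≤ x → 0 ≤ f x) {a c : ℝ}
    (ha : 0 ≤ a) (hc : ∀ x, a ≤ x → c ≤ f x) (k : ℕ) {x : ℝ} (hx : a ≤ x) :
    c * ((x - a) ^ k / (k.factorial : ℝ)) ≤ iteratedPrimitive f k x := by
  induction k generalizing x with
  | zero => simpa [iteratedPrimitive] using hc x hx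
  | succ k ih =>
    have hint := intervalIntegrable_iteratedPrimitive hf k
    have hnonneg : 0 ≤ᵐ[volume.restrict (Set.Ioc 0 x)] iteratedPrimitive f k :=
      ae_restrict_of_forall_mem measurableSet_Ioc
        fun y hy ↦ iteratedPrimitive_nonneg hf₀ k hy.1.le
    calc c * ((x - a) ^ (k + 1) / ((k + 1).factorial : ℝ))
        = ∫ y in a..x, c * ((y - a) ^ k / (k.factorial : ℝ)) := by
          rw [intervalIntegral.integral_const_mul, integral_sub_pow_div_factorial]
      _ ≤ ∫ y in a..x, iteratedPrimitive f k y :=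
          intervalIntegral.integral_mono_on hx
            (Continuous.intervalIntegrable (by fun_prop) _ _) (hint a x) fun y hy ↦ ih hy.1
      _ ≤ ∫ y in (0 : ℝ)..x, iteratedPrimitive f k y :=
          intervalIntegral.integral_mono_interval ha hx le_rfl hnonneg (hint 0 x)

end IteratedPrimitive

section LowerBound

open scoped ComplexOrder

variable {q₁ q₂ : ℕ} {χ₁ : DirichletCharacter ℂ q₁} {χ₂ : DirichletCharacter ℂ q₂}

lemma goldfeldA_eq_iteratedPrimitive {a : ℕ → ℝ} (ha : ∀ n, goldfeldCoeff χ₁ χ₂ n = a n) (k : ℕ)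
    (x w : ℝ) :
    goldfeldA χ₁ χ₂ k x w =
      iteratedPrimitive (fun y ↦ ∑ n ∈ Icc 1 ⌊y⌋₊, a n * (n : ℝ) ^ (-w)) k x := by
  induction k generalizing x with
  | zero => simp [goldfeldA, iteratedPrimitive, ha]
  | succ k ih =>
    simp only [goldfeldA, ih, iteratedPrimitive]
    exact intervalIntegral.integral_ofReal

lemma sub_one_pow_div_factorial_le_goldfeldA (hχ : ∀ n : ℕ, 0 ≤ (1 + χ₁ n) * (1 + χ₂ n)) (k : ℕ)
    {x : ℝ} (hx : 1 ≤ x) (w : ℝ) :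
    (((x - 1) ^ k / (k.factorial : ℝ) : ℝ) : ℂ) ≤ goldfeldA χ₁ χ₂ k x w := by
  choose a ha_nonneg ha using fun n ↦
    RCLike.nonneg_iff_exists_ofReal.mp (goldfeldCoeff_nonneg hχ n)
  have a_one : a 1 = 1 := Complex.ofReal_eq_one.mp ((ha 1).trans goldfeldCoeff_one)
  have term_nonneg (n : ℕ) : 0 ≤ a n * (n : ℝ) ^ (-w) := by
    have := ha_nonneg n
    positivity
  rw [goldfeldA_eq_iteratedPrimitive (fun n ↦ (ha n).symm), Complex.real_le_real]
  have one_le_summatory (y : ℝ) (hy : 1 ≤ y) :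
      1 ≤ ∑ n ∈ Icc 1 ⌊y⌋₊, a n * (n : ℝ) ^ (-w) := by
    simpa [a_one] using apply_one_le_sum_Icc_one_floor term_nonneg hy
  simpa using mul_sub_pow_div_factorial_le_iteratedPrimitive
    (fun _ _ ↦ (monotone_sum_Icc_one_floor term_nonneg).intervalIntegrable)
    (fun _ _ ↦ sum_nonneg fun n _ ↦ term_nonneg n) zero_le_one one_le_summatory k hx

/-- Besides quadratic characters this covers `χ₂ = χ₁⁻¹`, where the product is `|1 + χ₁(n)|²`. -/
theorem goldfeldA_lower_bound_general (k : ℕ) :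
    ∃ c : ℝ, 0 < c ∧ ∃ x₀ : ℝ, 0 < x₀ ∧
      ∀ (q₁ q₂ : ℕ) (χ₁ : DirichletCharacter ℂ q₁) (χ₂ : DirichletCharacter ℂ q₂),
        (∀ n : ℕ, 0 ≤ (1 + χ₁ n) * (1 + χ₂ n)) →
          ∀ w x : ℝ, x₀ ≤ x →
            ∃ r : ℝ, goldfeldA χ₁ χ₂ k x w = (r : ℂ) ∧ c * x ^ k ≤ r := by
  refine ⟨1 / (2 ^ k * (k.factorial : ℝ)), by positivity, 2, two_pos, ?_⟩
  intro q₁ q₂ χ₁ χ₂ hχ w x hx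
  have hA := sub_one_pow_div_factorial_le_goldfeldA hχ k (one_le_two.trans hx) w
  obtain ⟨hre, him⟩ := Complex.le_def.mp hA
  refine ⟨(goldfeldA χ₁ χ₂ k x w).re, Complex.ext rfl him.symm, le_trans ?_ hre⟩
  calc 1 / (2 ^ k * (k.factorial : ℝ)) * x ^ k
      = (x / 2) ^ k / (k.factorial : ℝ) := by
        rw [div_pow]
        field_simp
    _ ≤ (x - 1) ^ k / (k.factorial : ℝ) := by
        gcongr
        linarith

end LowerBound

/-- For every `k` there are constants `c_k > 0` and `x_k > 0`, independent of `χ₁`, `χ₂`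
and `w`, such that `A_k(x,w) ≥ c_k * x ^ k` for all `x ≥ x_k`. -/
theorem goldfeldA_lower_bound (k : ℕ) :
    ∃ c : ℝ, 0 < c ∧ ∃ x₀ : ℝ, 0 < x₀ ∧
      ∀ (q₁ q₂ : ℕ), 1 < q₁ → 1 < q₂ →
        ∀ (χ₁ : DirichletCharacter ℂ q₁) (χ₂ : DirichletCharacter ℂ q₂),
          χ₁.IsPrimitive → χ₁ ≠ 1 → χ₁ ^ 2 = 1 →
          χ₂.IsPrimitive → χ₂ ≠ 1 → χ₂ ^ 2 = 1 →
            ∀ w x : ℝ, x₀ ≤ x →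
              ∃ r : ℝ, goldfeldA χ₁ χ₂ k x w = (r : ℂ) ∧ c * x ^ k ≤ r := by
  obtain ⟨c, hc, x₀, hx₀, hA⟩ := goldfeldA_lower_bound_general k
  exact ⟨c, hc, x₀, hx₀, fun q₁ q₂ _ _ χ₁ χ₂ _ _ h₁ _ _ h₂ ↦ hA q₁ q₂ χ₁ χ₂ fun n ↦
    one_add_mul_one_add_nonneg h₁ h₂ n⟩
end

section
/- (Perron's formula for A₁) For all integers q₁, q₂ > 1, all primitive quadratic Dirichlet characters χ₁ mod q₁ and χ₂ mod q₂, every real w > 0, and every real x ≥ 1, one has A₁(x,w) = (1/2π)·∫_{−∞}^{∞} f(2 + w + it)·x^(3+it) / ((2+it)(3+it)) dt; in particular the integral on the right converges and is equal to the real number A₁(x,w). -/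
open DirichletCharacter Finset MeasureTheory Complex

/-- `f(s) = ζ(s) L(s,χ₁) L(s,χ₂) L(s,χ₁χ₂)`, where `χ₁χ₂` is the Dirichlet character
mod `q₁ q₂` given by `n ↦ χ₁(n) χ₂(n)`. -/
noncomputable def goldfeldF {q₁ q₂ : ℕ} [NeZero q₁] [NeZero q₂]
    (χ₁ : DirichletCharacter ℂ q₁) (χ₂ : DirichletCharacter ℂ q₂) (s : ℂ) : ℂ :=
  riemannZeta s * χ₁.LFunction s * χ₂.LFunction s *
    (changeLevel (dvd_mul_right q₁ q₂) χ₁ * changeLevel (dvd_mul_left q₂ q₁) χ₂).LFunction s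

/-- The partial sum `A₀(x,w) = Σ_{n ≤ x} a n * n ^ (-w)`. -/
noncomputable def goldfeldA₀ {q₁ q₂ : ℕ} (χ₁ : DirichletCharacter ℂ q₁)
    (χ₂ : DirichletCharacter ℂ q₂) (x w : ℝ) : ℂ :=
  ∑ n ∈ Icc 1 ⌊x⌋₊, goldfeldCoeff χ₁ χ₂ n * (((n : ℝ) ^ (-w) : ℝ) : ℂ)

/-- `A₁(x,w) = ∫₀ˣ A₀(y,w) dy`. -/
noncomputable def goldfeldA₁ {q₁ q₂ : ℕ} (χ₁ : DirichletCharacter ℂ q₁)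
    (χ₂ : DirichletCharacter ℂ q₂) (x w : ℝ) : ℂ :=
  ∫ y in (0:ℝ)..x, goldfeldA₀ χ₁ χ₂ y w

/-! Integrating the partial sums of a Dirichlet series `∑ b n * n ^ (-s)` over `[0, x]` gives the
Riesz mean `∑ b n * max 0 (x - n)`. Each weight `max 0 (x - n)` is a Mellin inversion integral,
since `s ↦ 1 / (s * (s + 1))` is the Mellin transform of `v ↦ max 0 (1 - v)`. That transform decays
quadratically on vertical lines, so on a line of absolute convergence Fubini exchanges the sum with
the inversion integral. Twisting the coefficients of `goldfeldF` by `n ^ (-w)` shifts the argument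
of the Dirichlet series from `c + t * I` to `c + w + t * I`. -/

section Kernel

variable {c x : ℝ}

lemma integrable_inv_sq_add_sq (hc : c ≠ 0) : Integrable fun t : ℝ => (c ^ 2 + t ^ 2)⁻¹ := by
  refine ((integrable_inv_one_add_sq.comp_div hc).const_mul (c ^ 2)⁻¹).congr
    (.of_forall fun t => ?_)
  dsimp only
  rw [div_pow, ← mul_inv, mul_add, mul_one, mul_div_cancel₀ _ (pow_ne_zero 2 hc)]

lemma ofReal_add_mul_I_ne_zero (hc : c ≠ 0) (t : ℝ) : (c : ℂ) + t * I ≠ 0 := fun h =>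
  hc (by simpa using congrArg re h)

lemma memLp_two_inv_ofReal_add_mul_I (hc : c ≠ 0) :
    MemLp (fun t : ℝ => ((c : ℂ) + t * I)⁻¹) 2 := by
  have hcont : Continuous fun t : ℝ => ((c : ℂ) + t * I)⁻¹ :=
    Continuous.inv₀ (by fun_prop) (ofReal_add_mul_I_ne_zero hc)
  refine (memLp_two_iff_integrable_sq_norm hcont.aestronglyMeasurable).2
    ((integrable_inv_sq_add_sq hc).congr (.of_forall fun t => ?_))
  dsimp only
  rw [norm_inv, inv_pow, norm_add_mul_I, Real.sq_sqrt (by positivity)]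

lemma verticalIntegrable_one_div_mul_add_one (hc : c ≠ 0) (hc' : c + 1 ≠ 0) :
    VerticalIntegrable (fun s => 1 / (s * (s + 1))) c := by
  refine ((memLp_two_inv_ofReal_add_mul_I hc).integrable_mul
    (memLp_two_inv_ofReal_add_mul_I hc')).congr (.of_forall fun t => ?_)
  simp only [Pi.mul_apply, ofReal_add, ofReal_one, one_div, mul_inv]
  ring

lemma hasMellin_congr {E : Type*} [NormedAddCommGroup E] [NormedSpace ℂ E] {f g : ℝ → E} {s : ℂ}
    {m : E} (hf : HasMellin f s m) (hfg : Set.EqOn f g (Set.Ioi 0)) : HasMellin g s m := by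
  have hint : Set.EqOn (fun v : ℝ => (v : ℂ) ^ (s - 1) • f v) (fun v => (v : ℂ) ^ (s - 1) • g v)
      (Set.Ioi 0) := fun v hv => by simp only [hfg hv]
  exact ⟨hf.1.congr_fun hint measurableSet_Ioi,
    (setIntegral_congr_fun measurableSet_Ioi hint).symm.trans hf.2⟩

lemma hasMellin_max_zero_one_sub {s : ℂ} (hs : 0 < s.re) :
    HasMellin (fun v : ℝ => ((max 0 (1 - v) : ℝ) : ℂ)) s (1 / (s * (s + 1))) := by
  have hone := hasMellin_one_Ioc hs
  have hid := hasMellin_cpow_Ioc 1 (s := s) (by rw [one_re]; linarith)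
  have hdiff := hasMellin_sub hone.1 hid.1
  have hs₀ : s ≠ 0 := by rintro rfl; simp at hs
  have hs₁ : s + 1 ≠ 0 := fun h => by
    have := congrArg re h
    rw [add_re, one_re, zero_re] at this
    linarith
  rw [hone.2, hid.2, show 1 / s - 1 / (s + 1) = 1 / (s * (s + 1)) by field_simp; ring] at hdiff
  refine hasMellin_congr hdiff fun v (hv : 0 < v) => ?_
  rcases le_or_gt v 1 with hv₁ | hv₁
  · simp [Set.indicator_of_mem, hv, hv₁]
  · simp [Set.indicator_of_notMem, hv₁.not_ge, hv₁.le]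

/-- The kernel `x ^ (s + 1) / (s * (s + 1))` of Perron's formula for the first Riesz mean
`∑ b n * max 0 (x - n)`. -/
noncomputable def rieszKernel (x : ℝ) (s : ℂ) : ℂ := (x : ℂ) ^ (s + 1) / (s * (s + 1))

lemma verticalIntegrable_rieszKernel (hc : c ≠ 0) (hc' : c + 1 ≠ 0) (hx : 0 < x) :
    VerticalIntegrable (rieszKernel x) c := by
  have hcont : Continuous fun t : ℝ => (x : ℂ) ^ ((c : ℂ) + t * I + 1) :=
    Continuous.const_cpow (by fun_prop) (.inl (ofReal_ne_zero.2 hx.ne'))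
  refine ((verticalIntegrable_one_div_mul_add_one hc hc').bdd_mul (c := x ^ (c + 1))
    hcont.aestronglyMeasurable (.of_forall fun t => ?_)).congr (.of_forall fun t => ?_)
  · simp [norm_cpow_eq_rpow_re_of_pos hx]
  · exact mul_one_div _ _

lemma inv_cpow_neg_mul_eq_rieszKernel (hx : 0 < x) (s : ℂ) :
    x * (((x⁻¹ : ℝ) : ℂ) ^ (-s) * (1 / (s * (s + 1)))) = rieszKernel x s := by
  have hinv : ((x⁻¹ : ℝ) : ℂ) ^ (-s) = (x : ℂ) ^ s := by
    rw [ofReal_inv, inv_cpow _ _ (by simpa [arg_ofReal_of_nonneg hx.le] using Real.pi_ne_zero.symm),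
      cpow_neg, inv_inv]
  rw [rieszKernel, hinv, cpow_add _ _ (ofReal_ne_zero.2 hx.ne'), cpow_one]
  ring

lemma integral_rieszKernel (hc : 0 < c) (hx : 0 < x) :
    ∫ t : ℝ, rieszKernel x (c + t * I) = 2 * Real.pi * ((max 0 (x - 1) : ℝ) : ℂ) := by
  let f : ℝ → ℂ := fun v => ((max 0 (1 - v) : ℝ) : ℂ)
  have hf (t : ℝ) : mellin f (c + t * I) = 1 / ((c + t * I) * (c + t * I + 1)) :=
    (hasMellin_max_zero_one_sub (by simpa using hc)).2
  have hvert : VerticalIntegrable (mellin f) c :=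
    (verticalIntegrable_one_div_mul_add_one hc.ne' (by positivity)).congr
      (.of_forall fun t => (hf t).symm)
  have hcont : Continuous f := by fun_prop
  have hinv : mellinInv c (mellin f) x⁻¹ = f x⁻¹ :=
    mellinInv_mellin_eq c f (inv_pos.2 hx) (hasMellin_max_zero_one_sub (by simpa using hc)).1 hvert
      hcont.continuousAt
  have hscale : ((max 0 (x - 1) : ℝ) : ℂ) = x * f x⁻¹ := by
    rw [← ofReal_mul, mul_max_of_nonneg _ _ hx.le, mul_zero, mul_sub, mul_one,
      mul_inv_cancel₀ hx.ne']
  simp only [mellinInv, hf, smul_eq_mul] at hinv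
  simp only [← inv_cpow_neg_mul_eq_rieszKernel hx]
  have hpi : (2 * Real.pi : ℂ) ≠ 0 := mul_ne_zero two_ne_zero (ofReal_ne_zero.2 Real.pi_ne_zero)
  rw [integral_const_mul, hscale, ← hinv, real_smul, ofReal_div, ofReal_one, ofReal_mul,
    ofReal_ofNat, one_div, mul_left_comm (x : ℂ), mul_inv_cancel_left₀ hpi]

end Kernel

section DirichletSeries

variable {b : ℕ → ℂ} {c x : ℝ}

lemma norm_term_vertical (b : ℕ → ℂ) (c t : ℝ) (n : ℕ) :
    ‖LSeries.term b (c + t * I) n‖ = ‖LSeries.term b c n‖ := by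
  simp [LSeries.norm_term_eq]

lemma continuous_term_vertical (b : ℕ → ℂ) (c : ℝ) (n : ℕ) :
    Continuous fun t : ℝ => LSeries.term b (c + t * I) n :=
  have hterm : Continuous fun s => LSeries.term b s n :=
    continuous_iff_continuousAt.2 fun s => (LSeries.hasDerivAt_term b n s).continuousAt
  hterm.comp (by fun_prop)

lemma verticalIntegrable_LSeries_mul {K : ℂ → ℂ} (hb : LSeriesSummable b c)
    (hK : VerticalIntegrable K c) : VerticalIntegrable (fun s => LSeries b s * K s) c := by
  have hbound (n : ℕ) (t : ℝ) : ‖LSeries.term b (c + t * I) n‖ ≤ ‖LSeries.term b c n‖ :=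
    (norm_term_vertical b c t n).le
  have hcont : Continuous fun t : ℝ => LSeries b (c + t * I) :=
    continuous_tsum (continuous_term_vertical b c) hb.norm hbound
  exact hK.bdd_mul hcont.aestronglyMeasurable
    (.of_forall fun t => tsum_of_norm_bounded hb.norm.hasSum fun n => hbound n t)

lemma hasSum_integral_term_mul {K : ℂ → ℂ} (hb : LSeriesSummable b c)
    (hK : VerticalIntegrable K c) :
    HasSum (fun n => ∫ t : ℝ, LSeries.term b (c + t * I) n * K (c + t * I))
      (∫ t : ℝ, LSeries b (c + t * I) * K (c + t * I)) := by
  have hint (n : ℕ) : Integrable fun t : ℝ => LSeries.term b (c + t * I) n * K (c + t * I) :=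
    hK.bdd_mul (continuous_term_vertical b c n).aestronglyMeasurable
      (.of_forall fun t => (norm_term_vertical b c t n).le)
  have hnorm : Summable fun n => ∫ t : ℝ, ‖LSeries.term b (c + t * I) n * K (c + t * I)‖ := by
    simp only [norm_mul, norm_term_vertical, integral_const_mul]
    exact hb.norm.mul_right _
  simpa only [tsum_mul_right, LSeries] using hasSum_integral_of_summable_integral_norm hint hnorm

lemma term_mul_rieszKernel (b : ℕ → ℂ) (hx : 0 ≤ x) (s : ℂ) {n : ℕ} (hn : n ≠ 0) :
    LSeries.term b s n * rieszKernel x s = b n * n * rieszKernel (x / n) s := by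
  have hn₀ : (n : ℂ) ≠ 0 := Nat.cast_ne_zero.2 hn
  have hns : (n : ℂ) ^ s ≠ 0 := by simp [cpow_eq_zero_iff, hn₀]
  have hsplit : (x : ℂ) ^ (s + 1) = ((x / n : ℝ) : ℂ) ^ (s + 1) * ((n : ℂ) ^ s * n) := by
    nth_rw 1 [← div_mul_cancel₀ x (Nat.cast_ne_zero.2 hn : (n : ℝ) ≠ 0)]
    rw [ofReal_mul, mul_cpow_ofReal_nonneg (by positivity) n.cast_nonneg, ofReal_natCast,
      cpow_add _ _ hn₀, cpow_one]
  rw [LSeries.term_of_ne_zero hn, rieszKernel, rieszKernel, hsplit]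
  field_simp

lemma integral_term_mul_rieszKernel (b : ℕ → ℂ) (hc : 0 < c) (hx : 0 < x) {n : ℕ} (hn : n ≠ 0) :
    ∫ t : ℝ, LSeries.term b (c + t * I) n * rieszKernel x (c + t * I) =
      2 * Real.pi * (b n * ((max 0 (x - n) : ℝ) : ℂ)) := by
  have hn₀ : (0 : ℝ) < n := Nat.cast_pos.2 hn.bot_lt
  have hscale : max 0 (x - n) = n * max 0 (x / n - 1) := by
    rw [mul_max_of_nonneg _ _ hn₀.le, mul_zero, mul_sub, mul_div_cancel₀ _ hn₀.ne', mul_one]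
  simp only [term_mul_rieszKernel b hx.le _ hn]
  rw [integral_const_mul, integral_rieszKernel hc (div_pos hx hn₀), hscale]
  push_cast
  ring

lemma integral_sum_Icc_one_floor {𝕜 : Type*} [RCLike 𝕜] (b : ℕ → 𝕜) (hx : 0 ≤ x) :
    ∫ y in (0 : ℝ)..x, ∑ n ∈ Icc 1 ⌊y⌋₊, b n =
      ∑ n ∈ Icc 1 ⌊x⌋₊, b n * ((x - n : ℝ) : 𝕜) := by
  -- The weight `x - t` vanishes at `t = x`, so Abel summation leaves no boundary term.
  have hderiv (t : ℝ) : HasDerivAt (fun t : ℝ => ((x - t : ℝ) : 𝕜)) (-1) t := by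
    simpa [Function.comp_def] using
      (RCLike.ofRealCLM (K := 𝕜)).hasDerivAt.scomp t ((hasDerivAt_id t).const_sub x)
  have hderiv' : deriv (fun t : ℝ => ((x - t : ℝ) : 𝕜)) = fun _ => -1 :=
    funext fun t => (hderiv t).deriv
  have hdrop (g : ℕ → 𝕜) (N : ℕ) :
      ∑ n ∈ Icc 0 N, g n * Function.update b 0 0 n = ∑ n ∈ Icc 1 N, g n * b n := by
    rw [← add_sum_Ioc_eq_sum_Icc N.zero_le, ← Icc_add_one_left_eq_Ioc, Function.update_self,
      mul_zero, zero_add, zero_add]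
    refine sum_congr rfl fun n hn => ?_
    rw [Function.update_of_ne (Nat.one_le_iff_ne_zero.1 (mem_Icc.1 hn).1)]
  have hdrop_one (N : ℕ) : ∑ n ∈ Icc 0 N, Function.update b 0 0 n = ∑ n ∈ Icc 1 N, b n := by
    simpa using hdrop 1 N
  have habel := sum_mul_eq_sub_integral_mul (f := fun t : ℝ => ((x - t : ℝ) : 𝕜))
    (Function.update b 0 0) hx (fun t _ => (hderiv t).differentiableAt)
    (by rw [hderiv']; exact integrableOn_const (by simp))
  simp only [hderiv', hdrop_one, hdrop, sub_self, RCLike.ofReal_zero, zero_mul, zero_sub,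
    neg_mul, one_mul, integral_neg, neg_neg] at habel
  rw [intervalIntegral.integral_of_le hx, ← habel]
  simp only [mul_comm]

theorem integral_sum_eq_integral_LSeries_mul_rieszKernel (hc : 0 < c) (hb : LSeriesSummable b c)
    (hx : 0 < x) :
    ∫ y in (0 : ℝ)..x, ∑ n ∈ Icc 1 ⌊y⌋₊, b n =
      1 / (2 * (Real.pi : ℂ)) * ∫ t : ℝ, LSeries b (c + t * I) * rieszKernel x (c + t * I) := by
  have hsupp (n : ℕ) (hn : n ∉ Icc 1 ⌊x⌋₊) :
      ∫ t : ℝ, LSeries.term b (c + t * I) n * rieszKernel x (c + t * I) = 0 := by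
    rcases eq_or_ne n 0 with rfl | hn₀
    · simp
    · have hxn : x < n := by
        rw [mem_Icc, not_and, Nat.le_floor_iff hx.le] at hn
        exact not_le.1 (hn (Nat.one_le_iff_ne_zero.2 hn₀))
      rw [integral_term_mul_rieszKernel b hc hx hn₀, max_eq_left (by linarith), ofReal_zero,
        mul_zero, mul_zero]
  have hsum := (hasSum_integral_term_mul hb
    (verticalIntegrable_rieszKernel hc.ne' (by positivity) hx)).unique
    (hasSum_sum_of_ne_finset_zero hsupp)
  rw [hsum, integral_sum_Icc_one_floor b hx.le, mul_sum]
  refine sum_congr rfl fun n hn => ?_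
  rw [mem_Icc, Nat.le_floor_iff hx.le] at hn
  rw [integral_term_mul_rieszKernel b hc hx (Nat.one_le_iff_ne_zero.1 hn.1),
    max_eq_right (sub_nonneg.2 hn.2)]
  have hpi : (Real.pi : ℂ) ≠ 0 := ofReal_ne_zero.2 Real.pi_ne_zero
  simp only [coe_algebraMap]
  field_simp

lemma LSeriesHasSum_mul_cpow_neg_iff {a : ℕ → ℂ} {w s L : ℂ} :
    LSeriesHasSum (fun n => a n * (n : ℂ) ^ (-w)) s L ↔ LSeriesHasSum a (s + w) L := by
  suffices h : LSeries.term (fun n => a n * (n : ℂ) ^ (-w)) s = LSeries.term a (s + w) by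
    rw [LSeriesHasSum, h, LSeriesHasSum]
  ext n
  rcases eq_or_ne n 0 with rfl | hn
  · simp
  · rw [LSeries.term_of_ne_zero hn, LSeries.term_of_ne_zero hn,
      cpow_add _ _ (Nat.cast_ne_zero.2 hn), cpow_neg, div_mul_eq_div_div, div_right_comm,
      div_eq_mul_inv (a n)]

end DirichletSeries

section Goldfeld

open scoped LSeries.notation

lemma LSeriesHasSum_LFunction {N : ℕ} [NeZero N] (χ : DirichletCharacter ℂ N) {s : ℂ}
    (hs : 1 < s.re) : LSeriesHasSum ↗χ s (χ.LFunction s) := by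
  rw [LFunction_eq_LSeries χ hs]
  exact (LSeriesSummable_of_one_lt_re χ hs).LSeriesHasSum

variable {q₁ q₂ : ℕ}

lemma changeLevel_mul_changeLevel_natCast {R : Type*} [CommMonoidWithZero R]
    (χ₁ : DirichletCharacter R q₁) (χ₂ : DirichletCharacter R q₂) (m : ℕ) :
    (changeLevel (dvd_mul_right q₁ q₂) χ₁ * changeLevel (dvd_mul_left q₂ q₁) χ₂)
      (m : ZMod (q₁ * q₂)) = χ₁ (m : ZMod q₁) * χ₂ (m : ZMod q₂) := by
  by_cases h : m.Coprime (q₁ * q₂)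
  · have hcoprime : IsCoprime (m : ℤ) ((q₁ * q₂ : ℕ) : ℤ) := Nat.isCoprime_iff_coprime.2 h
    have hχ₁ := changeLevel_eq_cast_of_dvd' χ₁ (dvd_mul_right q₁ q₂) hcoprime
    have hχ₂ := changeLevel_eq_cast_of_dvd' χ₂ (dvd_mul_left q₂ q₁) hcoprime
    simp only [Int.cast_natCast] at hχ₁ hχ₂
    rw [MulChar.mul_apply, hχ₁, hχ₂]
  · rw [MulChar.map_nonunit _ (by rwa [ZMod.isUnit_iff_coprime])]
    rw [Nat.coprime_mul_iff_right, not_and_or] at h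
    rcases h with h | h
    · rw [MulChar.map_nonunit χ₁ (by rwa [ZMod.isUnit_iff_coprime]), zero_mul]
    · rw [MulChar.map_nonunit χ₂ (by rwa [ZMod.isUnit_iff_coprime]), mul_zero]

lemma goldfeldCoeff_eq_convolution (χ₁ : DirichletCharacter ℂ q₁) (χ₂ : DirichletCharacter ℂ q₂) :
    goldfeldCoeff χ₁ χ₂ = 1 ⍟ (↗χ₁ ⍟ (↗χ₂ ⍟
      ↗(changeLevel (dvd_mul_right q₁ q₂) χ₁ * changeLevel (dvd_mul_left q₂ q₁) χ₂))) := by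
  ext n
  simp only [goldfeldCoeff, LSeries.convolution_def, changeLevel_mul_changeLevel_natCast,
    Pi.one_apply, one_mul, mul_sum, mul_assoc]

variable [NeZero q₁] [NeZero q₂] (χ₁ : DirichletCharacter ℂ q₁) (χ₂ : DirichletCharacter ℂ q₂)

lemma LSeriesHasSum_goldfeldCoeff {s : ℂ} (hs : 1 < s.re) :
    LSeriesHasSum (goldfeldCoeff χ₁ χ₂) s (goldfeldF χ₁ χ₂ s) := by
  rw [goldfeldCoeff_eq_convolution, goldfeldF, mul_assoc, mul_assoc]
  exact (LSeriesHasSum_one hs).convolution <| (LSeriesHasSum_LFunction χ₁ hs).convolution <|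
    (LSeriesHasSum_LFunction χ₂ hs).convolution (LSeriesHasSum_LFunction _ hs)

theorem goldfeldA₁_perron_general {c w x : ℝ} (hc : 0 < c) (hcw : 1 < c + w) (hx : 0 < x) :
    Integrable (fun t : ℝ => goldfeldF χ₁ χ₂ (c + w + t * I) * (x : ℂ) ^ (c + 1 + t * I) /
      ((c + t * I) * (c + 1 + t * I))) ∧
    goldfeldA₁ χ₁ χ₂ x w = (1 / (2 * (Real.pi : ℂ))) *
      ∫ t : ℝ, goldfeldF χ₁ χ₂ (c + w + t * I) * (x : ℂ) ^ (c + 1 + t * I) /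
        ((c + t * I) * (c + 1 + t * I)) := by
  set b : ℕ → ℂ := fun n => goldfeldCoeff χ₁ χ₂ n * (n : ℂ) ^ (-(w : ℂ)) with hb
  have hsum (t : ℝ) : LSeriesHasSum b (c + t * I) (goldfeldF χ₁ χ₂ (c + w + t * I)) := by
    rw [hb, LSeriesHasSum_mul_cpow_neg_iff, add_right_comm]
    exact LSeriesHasSum_goldfeldCoeff χ₁ χ₂ (by simpa using hcw)
  have hsummable : LSeriesSummable b c := by simpa using (hsum 0).LSeriesSummable
  have hA₁ : goldfeldA₁ χ₁ χ₂ x w = ∫ y in (0 : ℝ)..x, ∑ n ∈ Icc 1 ⌊y⌋₊, b n := by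
    simp only [goldfeldA₁, goldfeldA₀, hb, ofReal_cpow (Nat.cast_nonneg _), ofReal_natCast,
      ofReal_neg]
  have hintegrand (t : ℝ) : goldfeldF χ₁ χ₂ (c + w + t * I) * (x : ℂ) ^ (c + 1 + t * I) /
      ((c + t * I) * (c + 1 + t * I)) = LSeries b (c + t * I) * rieszKernel x (c + t * I) := by
    rw [(hsum t).LSeries_eq, rieszKernel, add_right_comm (c : ℂ) 1, mul_div_assoc]
  simp only [hintegrand, hA₁]
  exact ⟨verticalIntegrable_LSeries_mul hsummable
      (verticalIntegrable_rieszKernel hc.ne' (by positivity) hx),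
    integral_sum_eq_integral_LSeries_mul_rieszKernel hc hsummable hx⟩

end Goldfeld

/-- **Perron's formula for `A₁`:** for `w > 0` and `x ≥ 1`,
`A₁(x,w) = (1/2π) ∫_{-∞}^{∞} f(2+w+it) x^(3+it) / ((2+it)(3+it)) dt`,
the integral being convergent. -/
theorem goldfeldA₁_perron (q₁ q₂ : ℕ) (hq₁ : 1 < q₁) (hq₂ : 1 < q₂) :
    haveI : NeZero q₁ := ⟨by omega⟩
    haveI : NeZero q₂ := ⟨by omega⟩
    ∀ (χ₁ : DirichletCharacter ℂ q₁) (χ₂ : DirichletCharacter ℂ q₂),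
      χ₁.IsPrimitive → χ₁ ≠ 1 → χ₁ ^ 2 = 1 →
      χ₂.IsPrimitive → χ₂ ≠ 1 → χ₂ ^ 2 = 1 →
        ∀ w : ℝ, 0 < w → ∀ x : ℝ, 1 ≤ x →
          Integrable (fun t : ℝ =>
            goldfeldF χ₁ χ₂ (2 + (w : ℂ) + t * I) * (x : ℂ) ^ (3 + t * I) /
              ((2 + t * I) * (3 + t * I))) ∧
          goldfeldA₁ χ₁ χ₂ x w = (1 / (2 * (Real.pi : ℂ))) *
            ∫ t : ℝ, goldfeldF χ₁ χ₂ (2 + (w : ℂ) + t * I) * (x : ℂ) ^ (3 + t * I) /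
              ((2 + t * I) * (3 + t * I)) := by
  intro χ₁ χ₂ _ _ _ _ _ _ w hw x hx
  have : NeZero q₁ := ⟨by omega⟩
  have : NeZero q₂ := ⟨by omega⟩
  simpa [show (2 : ℂ) + 1 = 3 by norm_num] using
    goldfeldA₁_perron_general χ₁ χ₂ two_pos (show 1 < 2 + w by linarith) (zero_lt_one.trans_le hx)
end

section
/- For every ε > 0 there exists a constant C(ε) > 0 such that for all integers q₁, q₂ > 1, all primitive quadratic Dirichlet characters χ₁ mod q₁ and χ₂ mod q₂, every real w with 0 < w < 1, and every real x ≥ 1, the shifted-line integral satisfies |(1/2π)·∫_{−∞}^{∞} f(it)·x^(−w+it) / ((−w+it)(1−w+it)(2−w+it)(3−w+it)(4−w+it)) dt| ≤ C(ε)·(q₁q₂)^(1+ε)·x^(−w)/(w(1−w)). -/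
/-!
On the line `Re s = 1`, truncating the Dirichlet series of a nonprincipal `χ` mod `q` at height
about `q (1 + |t|)` leaves a tail which partial summation bounds by `O(1)`, because the character
sums are at most `q`; hence `L(1 + it, χ) ≪ log (q (1 + |t|))`, and the same argument treats `ζ` up
to its pole. The functional equation carries this to the line `Re s = 0` for primitive `χ`, at the
cost of a factor `(q (1 + |t|)) ^ (1 / 2)`: the root number has modulus `1`, and the quotient of
Gamma factors is `O((1 + |t|) ^ (1 / 2))` by the reflection formula. For an imprimitive character
each Euler factor which has to be removed has modulus at most `2`, and `2 ^ ω(q) ≪ q ^ δ`.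

Multiplying the four bounds gives `f(it) ≪ (q₁ q₂) ^ (1 + ε) (1 + |t|) ^ 3`, while the denominator
has modulus at least `w (1 - w) (1 + |t|) ^ 5 / 32`, so that the integral converges absolutely.
-/

open DirichletCharacter MeasureTheory Complex

/-! ### Gamma factors on the imaginary axis -/

theorem div_tanh_le_one_add_abs (x : ℝ) : x / Real.tanh x ≤ 1 + |x| := by
  wlog hx : 0 ≤ x generalizing x
  · simpa [Real.tanh_neg, neg_div_neg_eq] using this (-x) (by linarith)
  have hsinh : x ≤ Real.sinh x := Real.self_le_sinh_iff.mpr hx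
  have hexp : Real.cosh x - Real.sinh x ≤ 1 := by
    rw [Real.cosh_sub_sinh]
    exact Real.exp_le_one_iff.mpr (neg_nonpos.mpr hx)
  rw [abs_of_nonneg hx, Real.tanh_eq_sinh_div_cosh, div_div_eq_mul_div]
  refine div_le_of_le_mul₀ (hx.trans hsinh) (by positivity) ?_
  nlinarith

theorem mul_tanh_le_abs (x : ℝ) : x * Real.tanh x ≤ |x| :=
  calc x * Real.tanh x ≤ |x| * |Real.tanh x| := by rw [← abs_mul]; exact le_abs_self _
    _ ≤ |x| := mul_le_of_le_one_right (abs_nonneg x) (Real.abs_tanh_lt_one x).le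

theorem norm_Gamma_mul_I_sq {t : ℝ} (ht : t ≠ 0) :
    ‖Gamma (t * I)‖ ^ 2 = Real.pi / (t * Real.sinh (Real.pi * t)) := by
  have hs : (-(t * I) : ℂ) ≠ 0 := by simp [ht]
  have hconj : (starRingEnd ℂ) (Gamma (t * I)) = Gamma (-(t * I)) := by
    rw [← Gamma_conj, map_mul, conj_ofReal, conj_I, mul_neg]
  have hreflect : Gamma (t * I) * (-(t * I) * Gamma (-(t * I))) =
      Real.pi / (sinh (Real.pi * t) * I) := by
    rw [← Gamma_add_one _ hs, neg_add_eq_sub, Gamma_mul_Gamma_one_sub, ← mul_assoc, sin_mul_I]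
  apply ofReal_injective
  push_cast
  rw [← mul_conj', hconj, eq_div_of_mul_eq hs ((mul_assoc _ _ _).trans
    ((congrArg _ (mul_comm _ _)).trans hreflect)), div_div]
  congr 1
  linear_combination (-(t * sinh (Real.pi * t))) * I_sq

theorem norm_Gammaℂ_mul_I_sq {t : ℝ} (ht : t ≠ 0) :
    ‖Gammaℂ (t * I)‖ ^ 2 = 4 * Real.pi / (t * Real.sinh (Real.pi * t)) := by
  have hpow : ‖(2 * Real.pi : ℂ) ^ (-(t * I))‖ = 1 := by
    rw [← ofReal_ofNat, ← ofReal_mul, norm_cpow_eq_rpow_re_of_pos Real.two_pi_pos]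
    simp
  rw [Gammaℂ_def, norm_mul, norm_mul, hpow, mul_one, mul_pow, norm_Gamma_mul_I_sq ht]
  norm_num [mul_div_assoc]

theorem norm_Gammaℝ_one_sub_mul_I_div_sq {t : ℝ} (ht : t ≠ 0) :
    ‖Gammaℝ (1 - t * I) / Gammaℝ (t * I)‖ ^ 2 =
      t / (2 * Real.pi) * Real.tanh (Real.pi * t / 2) := by
  have hquot := Gammaℝ_div_Gammaℝ_one_sub (s := t * I) fun n h ↦ by
    have := congrArg im h
    simp [ht] at this
  have harg : (Real.pi : ℂ) * (t * I) / 2 = ((Real.pi * t / 2 : ℝ) : ℂ) * I := by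
    push_cast; ring
  rw [harg, cos_mul_I, ← ofReal_cosh] at hquot
  have hcosh := (Real.cosh_pos (Real.pi * t / 2)).ne'
  have hsinh : Real.sinh (Real.pi * t / 2) ≠ 0 := by simp [ht, Real.pi_ne_zero]
  rw [← inv_div, norm_inv, hquot, inv_pow, norm_mul, mul_pow, norm_Gammaℂ_mul_I_sq ht,
    norm_real, Real.norm_eq_abs, sq_abs, ← mul_div_cancel₀ (Real.pi * t) two_ne_zero,
    Real.sinh_two_mul, Real.tanh_eq_sinh_div_cosh]
  field_simp
  norm_num

theorem norm_Gammaℝ_two_sub_mul_I_div_sq {t : ℝ} (ht : t ≠ 0) :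
    ‖Gammaℝ (2 - t * I) / Gammaℝ (t * I + 1)‖ ^ 2 =
      t / (2 * Real.pi) / Real.tanh (Real.pi * t / 2) := by
  have hquot := inv_Gammaℝ_two_sub (s := t * I) fun n h ↦ by
    have := congrArg im h
    simp [ht] at this
  have harg : (Real.pi : ℂ) * (t * I) / 2 = ((Real.pi * t / 2 : ℝ) : ℂ) * I := by
    push_cast; ring
  rw [harg, sin_mul_I, ← ofReal_sinh] at hquot
  have hcosh := (Real.cosh_pos (Real.pi * t / 2)).ne'
  have hsinh : Real.sinh (Real.pi * t / 2) ≠ 0 := by simp [ht, Real.pi_ne_zero]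
  have hΓ : Gammaℝ (t * I + 1) ≠ 0 := Gammaℝ_ne_zero_of_re_pos (by simp)
  rw [← inv_inv (Gammaℝ (2 - t * I)), hquot, ← div_eq_mul_inv, inv_div, div_div_cancel_left' hΓ,
    norm_inv, inv_pow, norm_mul, norm_mul, norm_I, mul_one, mul_pow, norm_Gammaℂ_mul_I_sq ht,
    norm_real, Real.norm_eq_abs, sq_abs, ← mul_div_cancel₀ (Real.pi * t) two_ne_zero,
    Real.sinh_two_mul, Real.tanh_eq_sinh_div_cosh]
  field_simp
  norm_num

theorem norm_gammaFactor_one_sub_mul_I_div_le {q : ℕ} (χ : DirichletCharacter ℂ q) {t : ℝ}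
    (ht : t ≠ 0) :
    ‖gammaFactor χ (1 - t * I) / gammaFactor χ (t * I)‖ ≤ (1 + |t|) ^ (1 / 2 : ℝ) := by
  set u := Real.pi * t / 2 with hu
  have htu : t / (2 * Real.pi) = u / Real.pi ^ 2 := by rw [hu]; field_simp
  have hbound {y : ℝ} (hy : y ≤ 1 + |u|) : y / Real.pi ^ 2 ≤ 1 + |t| := by
    have hut : |u| = Real.pi * |t| / 2 := by
      rw [hu, abs_div, abs_mul, abs_of_pos Real.pi_pos, abs_two]
    refine div_le_of_le_mul₀ (by positivity) (by positivity) (hy.trans ?_)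
    rw [hut]
    nlinarith [Real.pi_gt_three, mul_nonneg (abs_nonneg t) Real.pi_pos.le]
  rw [← Real.sqrt_eq_rpow]
  refine Real.le_sqrt_of_sq_le ?_
  rcases χ.even_or_odd with h | h
  · rw [h.gammaFactor_def, h.gammaFactor_def, norm_Gammaℝ_one_sub_mul_I_div_sq ht, htu,
      div_mul_eq_mul_div]
    exact hbound ((mul_tanh_le_abs u).trans (le_add_of_nonneg_left zero_le_one))
  · rw [h.gammaFactor_def, h.gammaFactor_def, sub_add_eq_add_sub, one_add_one_eq_two,
      norm_Gammaℝ_two_sub_mul_I_div_sq ht, htu, div_right_comm]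
    exact hbound (div_tanh_le_one_add_abs u)

/-! ### Dirichlet series to the right of `Re s = 1` -/

theorem norm_LSeries_indicator_Iic_le {f : ℕ → ℂ} (hf : ∀ n, ‖f n‖ ≤ 1) (N : ℕ) {s : ℂ}
    (hs : 1 ≤ s.re) : ‖LSeries ((Set.Iic N).indicator f) s‖ ≤ 1 + Real.log N := by
  have hterm {n : ℕ} (hn : n ∈ Finset.Icc 1 N) :
      ‖LSeries.term ((Set.Iic N).indicator f) s n‖ ≤ (n : ℝ)⁻¹ := by
    obtain ⟨hn1, hnN⟩ := Finset.mem_Icc.mp hn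
    have hn1' : (1 : ℝ) ≤ n := Nat.one_le_cast.mpr hn1
    rw [LSeries.norm_term_eq, if_neg (by lia), Set.indicator_of_mem (Set.mem_Iic.mpr hnN),
      inv_eq_one_div]
    exact div_le_div₀ zero_le_one (hf n) (by positivity)
      (Real.self_le_rpow_of_one_le hn1' hs)
  have hsupp : ∀ n ∉ Finset.Icc 1 N, LSeries.term ((Set.Iic N).indicator f) s n = 0 := by
    intro n hn
    rcases eq_or_ne n 0 with rfl | hn0
    · exact LSeries.term_zero _ _
    · have : n ∉ Set.Iic N := fun h ↦ hn (Finset.mem_Icc.mpr ⟨by lia, h⟩)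
      rw [LSeries.term_of_ne_zero hn0, Set.indicator_of_notMem this, zero_div]
  calc ‖LSeries ((Set.Iic N).indicator f) s‖
      = ‖∑ n ∈ Finset.Icc 1 N, LSeries.term ((Set.Iic N).indicator f) s n‖ := by
        rw [LSeries, tsum_eq_sum hsupp]
    _ ≤ ∑ n ∈ Finset.Icc 1 N, (n : ℝ)⁻¹ := norm_sum_le_of_le _ fun _ ↦ hterm
    _ ≤ 1 + Real.log N := by
        have := harmonic_le_one_add_log N
        rw [harmonic_eq_sum_Icc] at this
        push_cast at this
        exact this

theorem LSeries_indicator_Ioi_eq_mul_integral {f : ℕ → ℂ} (hf : ∀ n, ‖f n‖ ≤ 1) {N : ℕ}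
    (hN : 1 ≤ N) {s : ℂ} (hs : 1 < s.re) :
    LSeries ((Set.Ioi N).indicator f) s =
      s * ∫ t in Set.Ioi (N : ℝ), (∑ k ∈ Finset.Ioc N ⌊t⌋₊, f k) * (t : ℂ) ^ (-(s + 1)) := by
  have hsum (n : ℕ) : ∑ k ∈ Finset.Icc 1 n, (Set.Ioi N).indicator f k =
      ∑ k ∈ Finset.Ioc N n, f k := by
    rw [Finset.sum_indicator_eq_sum_filter]
    congr 1
    ext k
    simp only [Finset.mem_filter, Finset.mem_Icc, Set.mem_Ioi, Finset.mem_Ioc]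
    lia
  rw [LSeries_eq_mul_integral' _ zero_le_one hs]
  · simp only [hsum]
    congr 1
    refine setIntegral_eq_of_subset_of_forall_sdiff_eq_zero measurableSet_Ioi
      (Set.Ioi_subset_Ioi (Nat.one_le_cast.mpr hN)) fun t ht ↦ ?_
    rw [Finset.Ioc_eq_empty_of_le (Nat.floor_le_of_le (not_lt.mp ht.2)), Finset.sum_empty,
      zero_mul]
  · refine Asymptotics.isBigO_of_le _ fun n ↦ ?_
    rw [Real.norm_of_nonneg (by positivity), Real.rpow_one, Real.norm_of_nonneg (by positivity)]
    calc ∑ k ∈ Finset.Icc 1 n, ‖(Set.Ioi N).indicator f k‖ ≤ ∑ _k ∈ Finset.Icc 1 n, (1 : ℝ) :=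
          Finset.sum_le_sum fun k _ ↦ (norm_indicator_le_norm_self f k).trans (hf k)
      _ = n := by simp

theorem norm_mul_cpow_neg_add_one_le {R : ℝ → ℂ} {M a : ℝ} (ha : 0 < a)
    (hR : ∀ t ∈ Set.Ioi a, ‖R t‖ ≤ M) (s : ℂ) :
    ∀ᵐ t ∂volume.restrict (Set.Ioi a),
      ‖R t * (t : ℂ) ^ (-(s + 1))‖ ≤ M * t ^ (-s.re - 1) := by
  filter_upwards [ae_restrict_mem measurableSet_Ioi] with t ht
  have ht0 : 0 < t := ha.trans ht
  rw [norm_mul, norm_cpow_eq_rpow_re_of_pos ht0, neg_re, add_re, one_re, neg_add']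
  exact mul_le_mul_of_nonneg_right (hR t ht) (by positivity)

theorem integrableOn_Ioi_mul_cpow_of_bounded {R : ℝ → ℂ} (hRm : Measurable R) {M a : ℝ}
    (ha : 0 < a) (hR : ∀ t ∈ Set.Ioi a, ‖R t‖ ≤ M) {s : ℂ} (hs : 0 < s.re) :
    IntegrableOn (fun t : ℝ ↦ R t * (t : ℂ) ^ (-(s + 1))) (Set.Ioi a) :=
  ((integrableOn_Ioi_rpow_of_lt (by linarith) ha).const_mul M).mono'
    (by fun_prop) (norm_mul_cpow_neg_add_one_le ha hR s)

theorem norm_integral_Ioi_mul_cpow_le {R : ℝ → ℂ} {M a : ℝ} (ha : 0 < a)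
    (hR : ∀ t ∈ Set.Ioi a, ‖R t‖ ≤ M) {s : ℂ} (hs : 0 < s.re) :
    ‖∫ t in Set.Ioi a, R t * (t : ℂ) ^ (-(s + 1))‖ ≤ M * (a ^ (-s.re) / s.re) := by
  have hlt : -s.re - 1 < -1 := by linarith
  calc _ ≤ ∫ t in Set.Ioi a, M * t ^ (-s.re - 1) :=
        norm_integral_le_of_norm_le ((integrableOn_Ioi_rpow_of_lt hlt ha).const_mul M)
          (norm_mul_cpow_neg_add_one_le ha hR s)
    _ = M * (a ^ (-s.re) / s.re) := by
        rw [integral_const_mul, integral_Ioi_rpow_of_lt hlt ha, sub_add_cancel, neg_div_neg_eq]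

theorem eqOn_sub_mul_cpow_neg_add_one {a : ℝ} (ha : 0 < a) (s : ℂ) :
    Set.EqOn (fun t : ℝ ↦ ((t - a : ℂ)) * (t : ℂ) ^ (-(s + 1)))
      (fun t : ℝ ↦ (t : ℂ) ^ (-s) - a * (t : ℂ) ^ (-(s + 1))) (Set.Ioi a) := by
  intro t ht
  have ht0 : (t : ℂ) ≠ 0 := ofReal_ne_zero.mpr (ha.trans ht).ne'
  have : (t : ℂ) ^ (-s) = t * (t : ℂ) ^ (-(s + 1)) := by
    rw [neg_add', cpow_sub _ _ ht0, cpow_one, mul_div_cancel₀ _ ht0]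
  simp only [this, sub_mul]

theorem integrableOn_Ioi_sub_mul_cpow {a : ℝ} (ha : 0 < a) {s : ℂ} (hs : 1 < s.re) :
    IntegrableOn (fun t : ℝ ↦ (t - a : ℂ) * (t : ℂ) ^ (-(s + 1))) (Set.Ioi a) :=
  ((integrableOn_Ioi_cpow_of_lt (by simpa using hs) ha).sub
    ((integrableOn_Ioi_cpow_of_lt (by simp; linarith) ha).const_mul _)).congr_fun
    (eqOn_sub_mul_cpow_neg_add_one ha s).symm measurableSet_Ioi

theorem integral_Ioi_sub_mul_cpow {a : ℝ} (ha : 0 < a) {s : ℂ} (hs : 1 < s.re) :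
    ∫ t in Set.Ioi a, (t - a : ℂ) * (t : ℂ) ^ (-(s + 1)) = a ^ (1 - s) / (s * (s - 1)) := by
  have hlt : (-s).re < -1 := by simpa using hs
  have hlt' : (-(s + 1)).re < -1 := by simp only [neg_re, add_re, one_re]; linarith
  have hs0 : s ≠ 0 := by rintro rfl; norm_num at hs
  have hs1 : s - 1 ≠ 0 := sub_ne_zero.mpr (by rintro rfl; norm_num at hs)
  have hs1' : 1 - s ≠ 0 := by rwa [← neg_sub, neg_ne_zero]
  have ha0 : (a : ℂ) ≠ 0 := ofReal_ne_zero.mpr ha.ne'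
  rw [setIntegral_congr_fun measurableSet_Ioi (eqOn_sub_mul_cpow_neg_add_one ha s),
    integral_sub (integrableOn_Ioi_cpow_of_lt hlt ha)
      ((integrableOn_Ioi_cpow_of_lt hlt' ha).const_mul _), integral_const_mul,
    integral_Ioi_cpow_of_lt hlt ha, integral_Ioi_cpow_of_lt hlt' ha, neg_add', sub_add_cancel,
    neg_add_eq_sub, cpow_sub _ _ ha0, cpow_neg, cpow_one]
  field_simp
  ring

theorem norm_sum_Ioc_floor_sub_le {f : ℕ → ℂ} {c : ℂ} {B : ℝ}
    (hB : ∀ n : ℕ, ‖∑ k ∈ Finset.Icc 1 n, f k - c * n‖ ≤ B) {N : ℕ} {t : ℝ} (ht : N ≤ t) :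
    ‖∑ k ∈ Finset.Ioc N ⌊t⌋₊, f k - c * (t - N)‖ ≤ 2 * B + ‖c‖ := by
  have ht0 : 0 ≤ t := N.cast_nonneg.trans ht
  have hsum : ∑ k ∈ Finset.Icc 1 ⌊t⌋₊, f k =
      ∑ k ∈ Finset.Icc 1 N, f k + ∑ k ∈ Finset.Ioc N ⌊t⌋₊, f k :=
    (Finset.sum_Ioc_consecutive f N.zero_le (Nat.le_floor ht)).symm
  have hfract : ‖c * (t - ⌊t⌋₊ : ℝ)‖ ≤ ‖c‖ := by
    rw [norm_mul, norm_real, Real.norm_of_nonneg (sub_nonneg.mpr (Nat.floor_le ht0))]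
    exact mul_le_of_le_one_right (norm_nonneg c) (by linarith [Nat.lt_floor_add_one t])
  calc _ = ‖(∑ k ∈ Finset.Icc 1 ⌊t⌋₊, f k - c * (⌊t⌋₊ : ℂ)) -
          (∑ k ∈ Finset.Icc 1 N, f k - c * N) - c * (t - ⌊t⌋₊ : ℝ)‖ := by
        rw [hsum]; push_cast; congr 1; ring
    _ ≤ B + B + ‖c‖ := norm_sub_le_of_le (norm_sub_le_of_le (hB _) (hB _)) hfract
    _ = 2 * B + ‖c‖ := by ring

theorem LSeries_indicator_Ioi_eq_add_integral {f : ℕ → ℂ} (hf : ∀ n, ‖f n‖ ≤ 1) {c : ℂ} {B : ℝ}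
    (hB : ∀ n : ℕ, ‖∑ k ∈ Finset.Icc 1 n, f k - c * n‖ ≤ B) {N : ℕ} (hN : 1 ≤ N) {s : ℂ}
    (hs : 1 < s.re) :
    LSeries ((Set.Ioi N).indicator f) s = c * (N ^ (1 - s) / (s - 1)) +
      s * ∫ t in Set.Ioi (N : ℝ),
        (∑ k ∈ Finset.Ioc N ⌊t⌋₊, f k - c * (t - N)) * (t : ℂ) ^ (-(s + 1)) := by
  have hN0 : (0 : ℝ) < N := Nat.cast_pos.mpr hN
  have hs0 : 0 < s.re := by linarith
  have hs' : s ≠ 0 := by rintro rfl; simp at hs0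
  set R : ℝ → ℂ := fun t ↦ ∑ k ∈ Finset.Ioc N ⌊t⌋₊, f k - c * (t - N) with hRdef
  have hRm : Measurable R :=
    ((measurable_from_nat (f := fun n ↦ ∑ k ∈ Finset.Ioc N n, f k)).comp
      Nat.measurable_floor).sub (by fun_prop)
  have hdecomp (t : ℝ) : (∑ k ∈ Finset.Ioc N ⌊t⌋₊, f k) * (t : ℂ) ^ (-(s + 1)) =
      c * ((t - (N : ℝ) : ℂ) * (t : ℂ) ^ (-(s + 1))) + R t * (t : ℂ) ^ (-(s + 1)) := by
    simp only [hRdef, ofReal_natCast]; ring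
  rw [LSeries_indicator_Ioi_eq_mul_integral hf hN hs]
  simp only [hdecomp]
  rw [integral_add ((integrableOn_Ioi_sub_mul_cpow hN0 hs).const_mul c)
      (integrableOn_Ioi_mul_cpow_of_bounded hRm hN0
        (fun t ht ↦ norm_sum_Ioc_floor_sub_le hB ht.le) hs0), integral_const_mul,
    integral_Ioi_sub_mul_cpow hN0 hs, mul_add, ofReal_natCast]
  congr 1
  field_simp

theorem norm_LSeries_indicator_Ioi_le {f : ℕ → ℂ} (hf : ∀ n, ‖f n‖ ≤ 1) {c : ℂ} {B : ℝ}
    (hB : ∀ n : ℕ, ‖∑ k ∈ Finset.Icc 1 n, f k - c * n‖ ≤ B) {N : ℕ} (hN : 1 ≤ N) {s : ℂ}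
    (hs : 1 < s.re) :
    ‖LSeries ((Set.Ioi N).indicator f) s‖ ≤ ‖c‖ / ‖s - 1‖ + (2 * B + ‖c‖) * ‖s‖ / N := by
  have hN1 : (1 : ℝ) ≤ N := Nat.one_le_cast.mpr hN
  have hB0 : 0 ≤ B := (norm_nonneg _).trans (hB 0)
  have hmain : ‖c * (N ^ (1 - s) / (s - 1))‖ ≤ ‖c‖ / ‖s - 1‖ := by
    rw [norm_mul, norm_div, norm_natCast_cpow_of_pos hN, ← mul_div_assoc]
    have : (N : ℝ) ^ (1 - s).re ≤ 1 :=
      Real.rpow_le_one_of_one_le_of_nonpos hN1 (by simpa using hs.le)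
    gcongr
    exact mul_le_of_le_one_right (norm_nonneg c) this
  have hpow : (N : ℝ) ^ (-s.re) / s.re ≤ 1 / N := by
    rw [one_div, ← Real.rpow_neg_one]
    exact (div_le_self (by positivity) hs.le).trans
      (Real.rpow_le_rpow_of_exponent_le hN1 (by linarith))
  rw [LSeries_indicator_Ioi_eq_add_integral hf hB hN hs]
  refine norm_add_le_of_le hmain ?_
  rw [norm_mul]
  calc _ ≤ ‖s‖ * ((2 * B + ‖c‖) * (N ^ (-s.re) / s.re)) := by
        gcongr
        exact norm_integral_Ioi_mul_cpow_le (by positivity)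
          (fun t ht ↦ norm_sum_Ioc_floor_sub_le hB ht.le) (by linarith)
    _ ≤ ‖s‖ * ((2 * B + ‖c‖) * (1 / N)) := by gcongr
    _ = (2 * B + ‖c‖) * ‖s‖ / N := by ring

theorem norm_LSeries_le_of_sum_sub_le {f : ℕ → ℂ} (hf : ∀ n, ‖f n‖ ≤ 1) {c : ℂ} {B : ℝ}
    (hB : ∀ n : ℕ, ‖∑ k ∈ Finset.Icc 1 n, f k - c * n‖ ≤ B) {N : ℕ} (hN : 1 ≤ N) {s : ℂ}
    (hs : 1 < s.re) :
    ‖LSeries f s‖ ≤ 1 + Real.log N + (‖c‖ / ‖s - 1‖ + (2 * B + ‖c‖) * ‖s‖ / N) := by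
  have hsummable (A : Set ℕ) : LSeriesSummable (A.indicator f) s :=
    LSeriesSummable_of_bounded_of_one_lt_re (m := 1)
      (fun n _ ↦ (norm_indicator_le_norm_self f n).trans (hf n)) hs
  rw [← Set.indicator_self_add_compl (Set.Iic N) f, Set.compl_Iic,
    LSeries_add (hsummable _) (hsummable _)]
  exact norm_add_le_of_le (norm_LSeries_indicator_Iic_le hf N hs.le)
    (norm_LSeries_indicator_Ioi_le hf hB hN hs)

/-! ### The line `Re s = 1` -/

theorem sum_range_eq_sum_range_mod_of_periodic {M : Type*} [AddCommMonoid M] {f : ℕ → M} {q : ℕ}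
    (hf : Function.Periodic f q) (h0 : ∑ k ∈ Finset.range q, f k = 0) (n : ℕ) :
    ∑ k ∈ Finset.range n, f k = ∑ k ∈ Finset.range (n % q), f k := by
  have hmul (m : ℕ) : ∑ k ∈ Finset.range (m * q), f k = 0 := by
    induction m with
    | zero => simp
    | succ m ih =>
      have (k : ℕ) : f (m * q + k) = f k := by rw [add_comm]; exact hf.nat_mul m k
      simp only [add_mul, one_mul, Finset.sum_range_add, ih, this, h0, add_zero]
  have hshift (k : ℕ) : f (n / q * q + k) = f k := by rw [add_comm]; exact hf.nat_mul _ k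
  conv_lhs => rw [← Nat.div_add_mod' n q, Finset.sum_range_add, hmul, zero_add]
  simp only [hshift]

theorem sum_range_natCast_zmod {M : Type*} [AddCommMonoid M] {q : ℕ} [NeZero q] (f : ZMod q → M) :
    ∑ k ∈ Finset.range q, f k = ∑ a, f a :=
  Finset.sum_nbij' (fun k ↦ (k : ZMod q)) ZMod.val (by simp) (by simp [ZMod.val_lt])
    (fun k hk ↦ ZMod.val_cast_of_lt (Finset.mem_range.mp hk)) (by simp) (by simp)

theorem norm_sum_Icc_dirichletCharacter_le {q : ℕ} [NeZero q] {χ : DirichletCharacter ℂ q}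
    (hχ : χ ≠ 1) (n : ℕ) : ‖∑ k ∈ Finset.Icc 1 n, χ k‖ ≤ q := by
  have hq : q ≠ 1 := by rintro rfl; exact hχ (level_one χ)
  have hper : Function.Periodic (fun k : ℕ ↦ χ k) q := fun k ↦ by simp
  have hzero : ∑ k ∈ Finset.range q, χ (k : ZMod q) = 0 :=
    (sum_range_natCast_zmod χ).trans (MulChar.sum_eq_zero_of_ne_one hχ)
  calc ‖∑ k ∈ Finset.Icc 1 n, χ k‖ = ‖∑ k ∈ Finset.range (n + 1), χ k‖ := by
        rw [Finset.range_eq_Ico, Finset.sum_eq_sum_Ico_succ_bot n.succ_pos, Nat.cast_zero,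
          χ.map_zero' hq, zero_add]
        rfl
    _ = ‖∑ k ∈ Finset.range ((n + 1) % q), χ k‖ := by
        rw [sum_range_eq_sum_range_mod_of_periodic hper hzero]
    _ ≤ ∑ _k ∈ Finset.range ((n + 1) % q), (1 : ℝ) :=
        norm_sum_le_of_le _ fun k _ ↦ χ.norm_le_one k
    _ ≤ q := by simpa using (Nat.mod_lt _ (NeZero.pos q)).le

theorem norm_LFunction_one_add_mul_I_le {q : ℕ} [NeZero q] (χ : DirichletCharacter ℂ q)
    {c : ℂ} {B : ℝ} (hB : ∀ n : ℕ, ‖∑ k ∈ Finset.Icc 1 n, χ k - c * n‖ ≤ B) {N : ℕ} (hN : 1 ≤ N)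
    {t : ℝ} (ht : t ≠ 0) :
    ‖χ.LFunction (1 + t * I)‖ ≤
      1 + Real.log N + (‖c‖ / |t| + (2 * B + ‖c‖) * ‖1 + t * I‖ / N) := by
  have hL : ContinuousAt (fun σ : ℝ ↦ ‖χ.LFunction (σ + t * I)‖) 1 := by
    have hχ : ContinuousAt χ.LFunction ((1 : ℝ) + t * I) :=
      (differentiableAt_LFunction χ _ (Or.inl (by simp [ht]))).continuousAt
    exact (hχ.comp (f := fun σ : ℝ ↦ (σ : ℂ) + t * I) (by fun_prop)).norm
  have hbound : ContinuousAt (fun σ : ℝ ↦ 1 + Real.log N +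
      (‖c‖ / ‖(σ + t * I : ℂ) - 1‖ + (2 * B + ‖c‖) * ‖(σ + t * I : ℂ)‖ / N)) 1 := by
    have : ‖((1 : ℝ) + t * I : ℂ) - 1‖ ≠ 0 := by simp [ht]
    fun_prop (disch := assumption)
  have := le_of_tendsto_of_tendsto (hL.tendsto.mono_left (nhdsWithin_le_nhds (s := Set.Ioi 1)))
    (hbound.tendsto.mono_left nhdsWithin_le_nhds) <| by
      filter_upwards [self_mem_nhdsWithin] with σ hσ
      have hσ' : 1 < ((σ : ℂ) + t * I).re := by simpa using hσ
      rw [LFunction_eq_LSeries χ hσ']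
      exact norm_LSeries_le_of_sum_sub_le (fun n ↦ χ.norm_le_one n) hB hN hσ'
  simpa using this

theorem norm_LFunction_one_add_mul_I_le_rpow {q : ℕ} [NeZero q] (χ : DirichletCharacter ℂ q)
    {c : ℂ} {B : ℝ} (hB : ∀ n : ℕ, ‖∑ k ∈ Finset.Icc 1 n, χ k - c * n‖ ≤ B)
    (hBq : 2 * B + ‖c‖ ≤ 2 * q) {t : ℝ} (ht : t ≠ 0) {δ : ℝ} (hδ : 0 < δ) :
    ‖χ.LFunction (1 + t * I)‖ ≤ (4 + 1 / δ) * (q * (1 + |t|)) ^ δ + ‖c‖ / |t| := by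
  set X : ℝ := q * (1 + |t|) with hX
  have hX1 : 1 ≤ X :=
    one_le_mul_of_one_le_of_one_le (Nat.one_le_cast.mpr NeZero.one_le) (by simp)
  set N := ⌈X⌉₊
  have hN : 1 ≤ N := Nat.one_le_ceil_iff.mpr (by linarith)
  have hNX : (N : ℝ) ≤ 2 * X := by linarith [Nat.ceil_lt_add_one (zero_le_one.trans hX1)]
  have hlog : Real.log N ≤ 1 + X ^ δ / δ :=
    calc Real.log N ≤ Real.log (2 * X) := Real.log_le_log (Nat.cast_pos.mpr hN) hNX
      _ = Real.log 2 + Real.log X := Real.log_mul two_ne_zero (by positivity)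
      _ ≤ 1 + X ^ δ / δ := add_le_add (by linarith [Real.log_two_lt_d9])
          (Real.log_le_rpow_div (by linarith) hδ)
  have htail : (2 * B + ‖c‖) * ‖1 + t * I‖ / N ≤ 2 := by
    have hnorm : ‖1 + t * I‖ ≤ 1 + |t| := (norm_add_le _ _).trans (by simp)
    refine div_le_of_le_mul₀ N.cast_nonneg zero_le_two ?_
    calc (2 * B + ‖c‖) * ‖1 + t * I‖ ≤ 2 * q * (1 + |t|) := by gcongr
      _ = 2 * X := by rw [hX, mul_assoc]
      _ ≤ 2 * N := by gcongr; exact Nat.le_ceil X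
  have hone : 1 ≤ X ^ δ := Real.one_le_rpow hX1 hδ.le
  calc _ ≤ 1 + Real.log N + (‖c‖ / |t| + (2 * B + ‖c‖) * ‖1 + t * I‖ / N) :=
        norm_LFunction_one_add_mul_I_le χ hB hN ht
    _ ≤ 1 + (1 + X ^ δ / δ) + (‖c‖ / |t| + 2) := by gcongr
    _ ≤ (4 + 1 / δ) * X ^ δ + ‖c‖ / |t| := by
        rw [add_mul, one_div_mul_eq_div]
        linarith

theorem norm_LFunction_one_add_mul_I_le_of_ne_one {q : ℕ} [NeZero q] {χ : DirichletCharacter ℂ q}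
    (hχ : χ ≠ 1) {t : ℝ} (ht : t ≠ 0) {δ : ℝ} (hδ : 0 < δ) :
    ‖χ.LFunction (1 + t * I)‖ ≤ (4 + 1 / δ) * (q * (1 + |t|)) ^ δ := by
  simpa using norm_LFunction_one_add_mul_I_le_rpow χ (c := 0) (B := q)
    (by simpa using norm_sum_Icc_dirichletCharacter_le hχ) (by simp) ht hδ

theorem norm_riemannZeta_one_add_mul_I_le {t : ℝ} (ht : t ≠ 0) {δ : ℝ} (hδ : 0 < δ) :
    ‖riemannZeta (1 + t * I)‖ ≤ (4 + 1 / δ) * (1 + |t|) ^ δ + 1 / |t| := by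
  have hsum (n : ℕ) :
      ‖∑ k ∈ Finset.Icc 1 n, (1 : DirichletCharacter ℂ 1) k - 1 * n‖ ≤ 0 := by
    simp [MulChar.one_apply (isUnit_of_subsingleton _)]
  simpa [LFunction_modOne_eq] using
    norm_LFunction_one_add_mul_I_le_rpow 1 hsum (by norm_num) ht hδ

/-! ### The functional equation and the line `Re s = 0` -/

theorem gammaFactor_inv {q : ℕ} (χ : DirichletCharacter ℂ q) :
    gammaFactor χ⁻¹ = gammaFactor χ := by
  have : χ⁻¹.Even ↔ χ.Even := by
    rw [DirichletCharacter.Even, MulChar.inv_apply_eq_inv', inv_eq_one, DirichletCharacter.Even]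
  classical exact funext fun _ ↦ if_congr this rfl rfl

theorem norm_gaussSum_inv {R : Type*} [CommRing R] [Fintype R] (χ : MulChar R ℂ)
    (ψ : AddChar R ℂ) : ‖gaussSum χ⁻¹ ψ‖ = ‖gaussSum χ ψ‖ := by
  have hunit : ‖χ (-1)‖ = 1 := by
    have := congrArg χ (neg_one_sq (R := R))
    rw [map_pow, map_one] at this
    exact norm_eq_one_of_pow_eq_one this two_ne_zero
  have hshift : χ (-1) * gaussSum χ ψ⁻¹ = gaussSum χ ψ := by
    rw [ψ.inv_mulShift, ← Units.coe_neg_one]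
    exact gaussSum_mulShift χ ψ (-1)
  rw [← hshift, norm_mul, hunit, one_mul, ← norm_star, star_gaussSum_eq, inv_inv]

theorem norm_rootNumber_inv {q : ℕ} [NeZero q] (χ : DirichletCharacter ℂ q) :
    ‖rootNumber χ⁻¹‖ = ‖rootNumber χ‖ := by
  simp only [rootNumber, norm_div, norm_pow, norm_I, one_pow, norm_gaussSum_inv]

theorem completedLFunction_two_ne_zero {q : ℕ} [NeZero q] (χ : DirichletCharacter ℂ q) :
    completedLFunction χ 2 ≠ 0 := by
  intro h
  have hL : LFunction χ 2 ≠ 0 := LFunction_ne_zero_of_one_le_re χ (Or.inr (by norm_num)) (by simp)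
  rw [LFunction_eq_completed_div_gammaFactor χ 2 (Or.inl two_ne_zero), h, zero_div] at hL
  exact hL rfl

/- Applying the functional equation to `χ` and then to `χ⁻¹` gives `W(χ) W(χ⁻¹) = 1`. -/
theorem norm_rootNumber_of_isPrimitive {q : ℕ} [NeZero q] {χ : DirichletCharacter ℂ q}
    (hχ : χ.IsPrimitive) : ‖rootNumber χ‖ = 1 := by
  have hχ' : χ⁻¹.IsPrimitive := (conductor_inv χ).trans hχ
  have hq : (q : ℂ) ≠ 0 := NeZero.ne _
  have hpow : (q : ℂ) ^ ((-1 : ℂ) - 1 / 2) * (q : ℂ) ^ ((2 : ℂ) - 1 / 2) = 1 := by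
    rw [← cpow_add _ _ hq]
    norm_num
  have hfwd := hχ.completedLFunction_one_sub (-1)
  have hbwd := hχ'.completedLFunction_one_sub 2
  rw [inv_inv] at hbwd
  norm_num only [sub_neg_eq_add] at hfwd hbwd hpow
  have hone : rootNumber χ * rootNumber χ⁻¹ = 1 := by
    refine mul_right_cancel₀ (completedLFunction_two_ne_zero χ) ?_
    rw [hbwd] at hfwd
    linear_combination -hfwd - rootNumber χ * rootNumber χ⁻¹ * completedLFunction χ 2 * hpow
  rw [← pow_eq_one_iff_of_nonneg (norm_nonneg _) two_ne_zero, sq]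
  nth_rewrite 2 [← norm_rootNumber_inv]
  rw [← norm_mul, hone, norm_one]

theorem norm_LFunction_mul_I_le_of_isPrimitive {q : ℕ} [NeZero q] {χ : DirichletCharacter ℂ q}
    (hχ : χ.IsPrimitive) {t : ℝ} (ht : t ≠ 0) :
    ‖χ.LFunction (t * I)‖ ≤ (q * (1 + |t|)) ^ (1 / 2 : ℝ) * ‖χ⁻¹.LFunction (1 - t * I)‖ := by
  have hre : (1 - t * I : ℂ).re = 1 := by simp
  have hs : (1 - t * I : ℂ) ≠ 0 := fun h ↦ by simp [h] at hre
  have hγ : gammaFactor χ (1 - t * I) ≠ 0 := by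
    rcases χ.even_or_odd with h | h <;> rw [h.gammaFactor_def] <;>
      exact Gammaℝ_ne_zero_of_re_pos (by simp)
  have hΛ : completedLFunction χ⁻¹ (1 - t * I) =
      χ⁻¹.LFunction (1 - t * I) * gammaFactor χ (1 - t * I) := by
    rw [LFunction_eq_completed_div_gammaFactor χ⁻¹ _ (Or.inl hs), gammaFactor_inv,
      div_mul_cancel₀ _ hγ]
  have hFE : χ.LFunction (t * I) = (q : ℂ) ^ (1 - t * I - 1 / 2 : ℂ) * rootNumber χ *
      (χ⁻¹.LFunction (1 - t * I) * (gammaFactor χ (1 - t * I) / gammaFactor χ (t * I))) := by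
    have := hχ.completedLFunction_one_sub (1 - t * I)
    rw [sub_sub_cancel, hΛ] at this
    rw [LFunction_eq_completed_div_gammaFactor χ _ (Or.inl (by simp [ht])), this]
    ring
  have hexp : (1 - t * I - 1 / 2 : ℂ).re = 1 / 2 := by
    rw [sub_re, hre]
    norm_num
  rw [hFE, norm_mul, norm_mul, norm_mul, norm_rootNumber_of_isPrimitive hχ, mul_one,
    norm_natCast_cpow_of_pos (NeZero.pos q), hexp, Real.mul_rpow (by positivity) (by positivity),
    mul_assoc, mul_comm (_ ^ _) ‖LFunction _ _‖]
  gcongr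
  exact norm_gammaFactor_one_sub_mul_I_div_le χ ht

theorem exists_norm_riemannZeta_mul_I_le {δ : ℝ} (hδ : 0 < δ) :
    ∃ C : ℝ, ∀ t : ℝ, ‖riemannZeta (t * I)‖ ≤ C * (1 + |t|) ^ (1 / 2 + δ) := by
  have hcont : Continuous fun t : ℝ ↦ riemannZeta (t * I) := continuous_iff_continuousAt.mpr
    fun t ↦ (differentiableAt_riemannZeta fun h ↦ by simpa using congrArg re h).continuousAt.comp
      (f := fun t : ℝ ↦ (t : ℂ) * I) (by fun_prop)
  obtain ⟨M, hM⟩ := (isCompact_Icc (a := (-1 : ℝ)) (b := 1)).exists_bound_of_continuousOn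
    hcont.continuousOn
  refine ⟨max M (5 + 1 / δ), fun t ↦ ?_⟩
  have hone {a : ℝ} (ha : 0 ≤ a) : 1 ≤ (1 + |t|) ^ a := Real.one_le_rpow (by simp) ha
  rcases le_total |t| 1 with ht | ht
  · calc ‖riemannZeta (t * I)‖ ≤ max M (5 + 1 / δ) := (hM t (abs_le.mp ht)).trans (le_max_left _ _)
      _ ≤ _ := le_mul_of_one_le_right (le_max_of_le_right (by positivity)) (hone (by positivity))
  · have ht0 : t ≠ 0 := abs_pos.mp (by linarith)
    have hfe : ‖riemannZeta (t * I)‖ ≤ (1 + |t|) ^ (1 / 2 : ℝ) * ‖riemannZeta (1 - t * I)‖ := by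
      simpa [LFunction_modOne_eq] using
        norm_LFunction_mul_I_le_of_isPrimitive (isPrimitive_one_level_one (R := ℂ)) ht0
    have hedge : ‖riemannZeta (1 - t * I)‖ ≤ (4 + 1 / δ) * (1 + |t|) ^ δ + 1 / |t| := by
      simpa [sub_eq_add_neg] using norm_riemannZeta_one_add_mul_I_le (neg_ne_zero.mpr ht0) hδ
    have hinv : 1 / |t| ≤ (1 + |t|) ^ δ := ((div_le_one (by positivity)).mpr ht).trans (hone hδ.le)
    calc ‖riemannZeta (t * I)‖ ≤ (1 + |t|) ^ (1 / 2 : ℝ) * ((5 + 1 / δ) * (1 + |t|) ^ δ) := by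
          refine hfe.trans ?_
          gcongr
          linarith
      _ = (5 + 1 / δ) * (1 + |t|) ^ (1 / 2 + δ) := by rw [Real.rpow_add (by positivity)]; ring
      _ ≤ _ := by gcongr; exact le_max_right _ _

theorem exists_norm_LFunction_mul_I_le_of_isPrimitive {δ : ℝ} (hδ : 0 < δ) :
    ∃ C : ℝ, 0 < C ∧ ∀ (q : ℕ) [NeZero q] (χ : DirichletCharacter ℂ q), χ.IsPrimitive →
      ∀ t : ℝ, t ≠ 0 → ‖χ.LFunction (t * I)‖ ≤ C * (q * (1 + |t|)) ^ (1 / 2 + δ) := by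
  obtain ⟨C, hC⟩ := exists_norm_riemannZeta_mul_I_le hδ
  refine ⟨max C (4 + 1 / δ), by positivity, fun q _ χ hχ t ht ↦ ?_⟩
  rcases eq_or_ne χ 1 with rfl | hne
  · obtain rfl : q = 1 := by rw [← hχ, conductor_one]
    rw [LFunction_modOne_eq, Nat.cast_one, one_mul]
    refine (hC t).trans ?_
    gcongr
    exact le_max_left _ _
  · have hedge : ‖χ⁻¹.LFunction (1 - t * I)‖ ≤ (4 + 1 / δ) * (q * (1 + |t|)) ^ δ := by
      simpa [sub_eq_add_neg] using
        norm_LFunction_one_add_mul_I_le_of_ne_one (inv_ne_one.mpr hne) (neg_ne_zero.mpr ht) hδ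
    have hX : 0 < q * (1 + |t|) := mul_pos (Nat.cast_pos.mpr (NeZero.pos q)) (by positivity)
    calc ‖χ.LFunction (t * I)‖
        ≤ (q * (1 + |t|)) ^ (1 / 2 : ℝ) * ((4 + 1 / δ) * (q * (1 + |t|)) ^ δ) :=
          (norm_LFunction_mul_I_le_of_isPrimitive hχ ht).trans (by gcongr)
      _ = (4 + 1 / δ) * (q * (1 + |t|)) ^ (1 / 2 + δ) := by rw [Real.rpow_add hX]; ring
      _ ≤ _ := by gcongr; exact le_max_right _ _

/-! ### The four-fold product and the shifted integral -/

theorem exists_two_pow_card_primeFactors_le_rpow {δ : ℝ} (hδ : 0 < δ) :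
    ∃ C : ℝ, 0 < C ∧ ∀ n : ℕ, n ≠ 0 → (2 : ℝ) ^ n.primeFactors.card ≤ C * (n : ℝ) ^ δ := by
  -- A prime `p ≥ K` satisfies `2 ≤ p ^ δ`, and fewer than `K` primes are smaller than `K`.
  set K := ⌈(2 : ℝ) ^ (1 / δ)⌉₊
  refine ⟨2 ^ K, by positivity, fun n hn ↦ ?_⟩
  set small := {p ∈ n.primeFactors | p < K}
  set large := {p ∈ n.primeFactors | ¬p < K}
  have hsmall : small.card ≤ K := by
    refine (Finset.card_le_card fun p hp ↦ ?_).trans_eq (Finset.card_range K)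
    exact Finset.mem_range.mpr (Finset.mem_filter.mp hp).2
  have htwo : ∀ p ∈ large, (2 : ℝ) ≤ (p : ℝ) ^ δ := by
    intro p hp
    have hKp : (K : ℝ) ≤ p := Nat.cast_le.mpr (not_lt.mp (Finset.mem_filter.mp hp).2)
    calc (2 : ℝ) = ((2 : ℝ) ^ (1 / δ)) ^ δ := by
          rw [← Real.rpow_mul zero_le_two, one_div_mul_cancel hδ.ne', Real.rpow_one]
      _ ≤ (p : ℝ) ^ δ := by gcongr; exact (Nat.le_ceil _).trans hKp
  have hprod : ∏ p ∈ large, p ≤ n := Nat.le_of_dvd (Nat.pos_of_ne_zero hn)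
    ((Finset.prod_dvd_prod_of_subset _ _ _ (Finset.filter_subset _ _)).trans
      (Nat.prod_primeFactors_dvd n))
  have hlarge : (2 : ℝ) ^ large.card ≤ (n : ℝ) ^ δ :=
    calc (2 : ℝ) ^ large.card = ∏ _p ∈ large, (2 : ℝ) := (Finset.prod_const _).symm
      _ ≤ ∏ p ∈ large, (p : ℝ) ^ δ := Finset.prod_le_prod (fun _ _ ↦ zero_le_two) htwo
      _ = ((∏ p ∈ large, p : ℕ) : ℝ) ^ δ := by
        rw [Real.finsetProd_rpow _ _ (fun _ _ ↦ Nat.cast_nonneg _), Nat.cast_prod]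
      _ ≤ (n : ℝ) ^ δ := by gcongr
  rw [← Finset.card_filter_add_card_filter_not (s := n.primeFactors) (· < K), pow_add]
  gcongr
  exact one_le_two

theorem norm_LFunction_mul_I_le_primitiveCharacter {q : ℕ} [NeZero q] (χ : DirichletCharacter ℂ q)
    [NeZero χ.conductor] (t : ℝ) :
    ‖χ.LFunction (t * I)‖ ≤ ‖χ.primitiveCharacter.LFunction (t * I)‖ * 2 ^ q.primeFactors.card := by
  have hfactor : ∀ p ∈ q.primeFactors,
      ‖1 - χ.primitiveCharacter p * (p : ℂ) ^ (-(t * I))‖ ≤ 2 := by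
    intro p hp
    have hpow : ‖(p : ℂ) ^ (-(t * I))‖ = 1 := by
      rw [norm_natCast_cpow_of_pos (Nat.pos_of_mem_primeFactors hp)]
      simp
    calc _ ≤ 1 + 1 := norm_sub_le_of_le norm_one.le
          (by rw [norm_mul, hpow, mul_one]; exact χ.primitiveCharacter.norm_le_one p)
      _ = 2 := one_add_one_eq_two
  have hne : (t * I : ℂ) ≠ 1 := fun h ↦ by simpa using congrArg re h
  have := LFunction_changeLevel χ.conductor_dvd_level χ.primitiveCharacter (Or.inr hne)
  rw [changeLevel_primitiveCharacter] at this
  rw [this, norm_mul, norm_prod, ← Finset.prod_const]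
  gcongr with p hp
  exact hfactor p hp

theorem exists_norm_LFunction_mul_I_le {δ : ℝ} (hδ : 0 < δ) :
    ∃ C : ℝ, 0 < C ∧ ∀ (q : ℕ) [NeZero q] (χ : DirichletCharacter ℂ q) (t : ℝ), t ≠ 0 →
      ‖χ.LFunction (t * I)‖ ≤ C * (q * (1 + |t|)) ^ (1 / 2 + δ) := by
  obtain ⟨C, hC, hprim⟩ := exists_norm_LFunction_mul_I_le_of_isPrimitive (half_pos hδ)
  obtain ⟨D, hD, homega⟩ := exists_two_pow_card_primeFactors_le_rpow (half_pos hδ)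
  refine ⟨C * D, mul_pos hC hD, fun q _ χ t ht ↦ ?_⟩
  have : NeZero χ.conductor := ⟨χ.conductor_ne_zero⟩
  have hcond : (χ.conductor : ℝ) ≤ q :=
    Nat.cast_le.mpr (Nat.le_of_dvd (NeZero.pos q) χ.conductor_dvd_level)
  have hq : (0 : ℝ) < q := Nat.cast_pos.mpr (NeZero.pos q)
  have hqX : (q : ℝ) ≤ q * (1 + |t|) := le_mul_of_one_le_right hq.le (by simp)
  calc ‖χ.LFunction (t * I)‖
      ≤ ‖χ.primitiveCharacter.LFunction (t * I)‖ * 2 ^ q.primeFactors.card :=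
        norm_LFunction_mul_I_le_primitiveCharacter χ t
    _ ≤ C * (χ.conductor * (1 + |t|)) ^ (1 / 2 + δ / 2) * (D * (q : ℝ) ^ (δ / 2)) := by
        gcongr
        · exact hprim _ _ χ.primitiveCharacter_isPrimitive t ht
        · exact homega q (NeZero.ne q)
    _ ≤ C * (q * (1 + |t|)) ^ (1 / 2 + δ / 2) * (D * (q * (1 + |t|)) ^ (δ / 2)) := by gcongr
    _ = C * D * (q * (1 + |t|)) ^ (1 / 2 + δ / 2 + δ / 2) := by
        rw [Real.rpow_add (hq.trans_le hqX) (1 / 2 + δ / 2) (δ / 2)]; ring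
    _ = C * D * (q * (1 + |t|)) ^ (1 / 2 + δ) := by rw [add_assoc, add_halves]

theorem exists_norm_goldfeldF_mul_I_le {ε : ℝ} (hε : 0 < ε) :
    ∃ C : ℝ, 0 < C ∧ ∀ (q₁ q₂ : ℕ) [NeZero q₁] [NeZero q₂] (χ₁ : DirichletCharacter ℂ q₁)
      (χ₂ : DirichletCharacter ℂ q₂) (t : ℝ), t ≠ 0 →
        ‖goldfeldF χ₁ χ₂ (t * I)‖ ≤ C * ((q₁ * q₂ : ℕ) : ℝ) ^ (1 + ε) * (1 + |t|) ^ 3 := by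
  set δ := min (ε / 2) (1 / 4)
  have hδε : δ ≤ ε / 2 := min_le_left _ _
  have hδ4 : δ ≤ 1 / 4 := min_le_right _ _
  obtain ⟨C, hC, hL⟩ := exists_norm_LFunction_mul_I_le (δ := δ) (by positivity)
  refine ⟨C ^ 4, by positivity, fun q₁ q₂ _ _ χ₁ χ₂ t ht ↦ ?_⟩
  set T := 1 + |t|
  have hT : 1 ≤ T := by simp [T]
  have hQ : (1 : ℝ) ≤ (q₁ * q₂ : ℕ) := Nat.one_le_cast.mpr NeZero.one_le
  have hζ : ‖riemannZeta (t * I)‖ ≤ C * T ^ (1 / 2 + δ) := by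
    simpa [LFunction_modOne_eq] using hL 1 1 t ht
  have hmul : (((q₁ * q₂ : ℕ) : ℝ) ^ 2 * T ^ 4) ^ (1 / 2 + δ) = T ^ (1 / 2 + δ) *
      (q₁ * T) ^ (1 / 2 + δ) * (q₂ * T) ^ (1 / 2 + δ) * ((q₁ * q₂ : ℕ) * T) ^ (1 / 2 + δ) := by
    iterate 3 rw [← Real.mul_rpow (by positivity) (by positivity)]
    push_cast
    ring_nf
  calc ‖goldfeldF χ₁ χ₂ (t * I)‖
      ≤ C * T ^ (1 / 2 + δ) * (C * (q₁ * T) ^ (1 / 2 + δ)) * (C * (q₂ * T) ^ (1 / 2 + δ)) *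
          (C * ((q₁ * q₂ : ℕ) * T) ^ (1 / 2 + δ)) := by
        rw [goldfeldF, norm_mul, norm_mul, norm_mul]
        gcongr <;> exact hL _ _ t ht
    _ = C ^ 4 * ((q₁ * q₂ : ℕ) ^ 2 * T ^ 4) ^ (1 / 2 + δ) := by
        rw [hmul]; ring
    _ = C ^ 4 * (((q₁ * q₂ : ℕ) : ℝ) ^ (2 * (1 / 2 + δ)) * T ^ (4 * (1 / 2 + δ))) := by
        rw [Real.mul_rpow (by positivity) (by positivity), ← Real.rpow_natCast_mul (by positivity),
          ← Real.rpow_natCast_mul (by positivity)]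
        norm_num
    _ ≤ C ^ 4 * (((q₁ * q₂ : ℕ) : ℝ) ^ (1 + ε) * T ^ (3 : ℝ)) := by
        gcongr <;> linarith
    _ = C ^ 4 * ((q₁ * q₂ : ℕ) : ℝ) ^ (1 + ε) * T ^ 3 := by
        rw [mul_assoc, Real.rpow_ofNat]

theorem mul_one_add_abs_div_two_le_norm_add_mul_I {b c : ℝ} (hc : c ≤ 1) (hcb : c ≤ |b|) (t : ℝ) :
    c * (1 + |t|) / 2 ≤ ‖(b + t * I : ℂ)‖ := by
  have hre : |b| ≤ ‖(b + t * I : ℂ)‖ := by simpa using abs_re_le_norm (b + t * I)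
  have him : |t| ≤ ‖(b + t * I : ℂ)‖ := by simpa using abs_im_le_norm (b + t * I)
  linarith [mul_le_of_le_one_left (abs_nonneg t) hc]

theorem mul_one_add_abs_pow_five_div_le_norm_prod {w : ℝ} (hw : 0 < w) (hw' : w < 1) (t : ℝ) :
    w * (1 - w) * (1 + |t|) ^ 5 / 32 ≤
      ‖(-(w : ℂ) + t * I) * (1 - (w : ℂ) + t * I) * (2 - (w : ℂ) + t * I) *
        (3 - (w : ℂ) + t * I) * (4 - (w : ℂ) + t * I)‖ := by
  have h₀ := mul_one_add_abs_div_two_le_norm_add_mul_I hw'.le (abs_neg w ▸ le_abs_self w) t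
  have h₁ := mul_one_add_abs_div_two_le_norm_add_mul_I (by linarith) (le_abs_self (1 - w)) t
  have hlarge {b : ℝ} (hb : 2 ≤ b) : 1 * (1 + |t|) / 2 ≤ ‖((b - w : ℝ) + t * I : ℂ)‖ :=
    mul_one_add_abs_div_two_le_norm_add_mul_I le_rfl (le_abs.mpr (Or.inl (by linarith))) t
  have h₂ := hlarge le_rfl
  have h₃ := hlarge (b := 3) (by norm_num)
  have h₄ := hlarge (b := 4) (by norm_num)
  push_cast at h₀ h₁ h₂ h₃ h₄
  have : 0 < 1 - w := sub_pos.mpr hw'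
  rw [norm_mul, norm_mul, norm_mul, norm_mul]
  calc w * (1 - w) * (1 + |t|) ^ 5 / 32 = w * (1 + |t|) / 2 * ((1 - w) * (1 + |t|) / 2) *
        (1 * (1 + |t|) / 2) * (1 * (1 + |t|) / 2) * (1 * (1 + |t|) / 2) := by ring
    _ ≤ _ := by gcongr

theorem norm_shifted_integral_le {F : ℝ → ℂ} {M : ℝ} (hF : ∀ᵐ t, ‖F t‖ ≤ M * (1 + |t|) ^ 3)
    {w : ℝ} (hw : 0 < w) (hw' : w < 1) {x : ℝ} (hx : 0 < x) :
    ‖(1 / (2 * (Real.pi : ℂ))) * ∫ t : ℝ, F t * (x : ℂ) ^ (-(w : ℂ) + t * I) /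
        ((-(w : ℂ) + t * I) * (1 - (w : ℂ) + t * I) * (2 - (w : ℂ) + t * I) *
          (3 - (w : ℂ) + t * I) * (4 - (w : ℂ) + t * I))‖ ≤
      16 * M * x ^ (-w) / (w * (1 - w)) := by
  have hw1 : 0 < 1 - w := sub_pos.mpr hw'
  set A := 32 * M * x ^ (-w) / (w * (1 - w)) with hA
  have hbound : ∀ᵐ t : ℝ, ‖F t * (x : ℂ) ^ (-(w : ℂ) + t * I) /
      ((-(w : ℂ) + t * I) * (1 - (w : ℂ) + t * I) * (2 - (w : ℂ) + t * I) *
        (3 - (w : ℂ) + t * I) * (4 - (w : ℂ) + t * I))‖ ≤ A * (1 + t ^ 2)⁻¹ := by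
    filter_upwards [hF] with t ht
    have hM : 0 ≤ M := nonneg_of_mul_nonneg_left ((norm_nonneg _).trans ht) (by positivity)
    have hsq : 1 + t ^ 2 ≤ (1 + |t|) ^ 2 := by
      rw [← sq_abs t]
      linarith [abs_nonneg t, add_sq 1 |t|]
    have hpow : ‖(x : ℂ) ^ (-(w : ℂ) + t * I)‖ = x ^ (-w) := by
      rw [norm_cpow_eq_rpow_re_of_pos hx]
      simp
    rw [norm_div, norm_mul, hpow]
    calc _ ≤ M * (1 + |t|) ^ 3 * x ^ (-w) / (w * (1 - w) * (1 + |t|) ^ 5 / 32) := by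
          gcongr
          exact mul_one_add_abs_pow_five_div_le_norm_prod hw hw' t
      _ = A * ((1 + |t|) ^ 2)⁻¹ := by rw [hA]; field_simp
      _ ≤ A * (1 + t ^ 2)⁻¹ := by gcongr
  have hint := norm_integral_le_of_norm_le (integrable_inv_one_add_sq.const_mul A) hbound
  rw [integral_const_mul, integral_univ_inv_one_add_sq] at hint
  have hpi : ‖(1 / (2 * (Real.pi : ℂ)))‖ = 1 / (2 * Real.pi) := by
    simp [abs_of_pos Real.pi_pos]
  rw [norm_mul, hpi]
  calc _ ≤ 1 / (2 * Real.pi) * (A * Real.pi) := by gcongr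
    _ = 16 * M * x ^ (-w) / (w * (1 - w)) := by rw [hA]; field_simp; ring

theorem goldfeld_shifted_integral_bound_general (ε : ℝ) (hε : 0 < ε) :
    ∃ C : ℝ, 0 < C ∧ ∀ (q₁ q₂ : ℕ) [NeZero q₁] [NeZero q₂]
      (χ₁ : DirichletCharacter ℂ q₁) (χ₂ : DirichletCharacter ℂ q₂),
        ∀ w : ℝ, 0 < w → w < 1 → ∀ x : ℝ, 0 < x →
          ‖(1 / (2 * (Real.pi : ℂ))) *
              ∫ t : ℝ, goldfeldF χ₁ χ₂ (t * I) * (x : ℂ) ^ (-(w : ℂ) + t * I) /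
                ((-(w : ℂ) + t * I) * (1 - (w : ℂ) + t * I) * (2 - (w : ℂ) + t * I) *
                  (3 - (w : ℂ) + t * I) * (4 - (w : ℂ) + t * I))‖ ≤
            C * ((q₁ * q₂ : ℕ) : ℝ) ^ (1 + ε) * x ^ (-w) / (w * (1 - w)) := by
  obtain ⟨C, hC, hF⟩ := exists_norm_goldfeldF_mul_I_le hε
  refine ⟨16 * C, by positivity, fun q₁ q₂ _ _ χ₁ χ₂ w hw hw' x hx ↦ ?_⟩
  have hae : ∀ᵐ t : ℝ, ‖goldfeldF χ₁ χ₂ (t * I)‖ ≤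
      C * ((q₁ * q₂ : ℕ) : ℝ) ^ (1 + ε) * (1 + |t|) ^ 3 := by
    filter_upwards [Measure.ae_ne volume (0 : ℝ)] with t ht
    exact hF q₁ q₂ χ₁ χ₂ t ht
  rw [mul_assoc 16]
  exact norm_shifted_integral_le hae hw hw' hx

/-- Bound for the integral of `f(s+w) x^s / (s(s+1)(s+2)(s+3)(s+4))` on the shifted
line `Re s = -w`, parametrized as `s = -w + it`:
`|(1/2π) ∫ f(it) x^(-w+it) / ((-w+it)(1-w+it)(2-w+it)(3-w+it)(4-w+it)) dt|
  ≤ C(ε) (q₁q₂)^(1+ε) x^(-w) / (w(1-w))`. -/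
theorem goldfeld_shifted_integral_bound (ε : ℝ) (hε : 0 < ε) :
    ∃ C : ℝ, 0 < C ∧
      ∀ (q₁ q₂ : ℕ) (hq₁ : 1 < q₁) (hq₂ : 1 < q₂),
        haveI : NeZero q₁ := ⟨by omega⟩
        haveI : NeZero q₂ := ⟨by omega⟩
        ∀ (χ₁ : DirichletCharacter ℂ q₁) (χ₂ : DirichletCharacter ℂ q₂),
          χ₁.IsPrimitive → χ₁ ≠ 1 → χ₁ ^ 2 = 1 →
          χ₂.IsPrimitive → χ₂ ≠ 1 → χ₂ ^ 2 = 1 →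
            ∀ w : ℝ, 0 < w → w < 1 → ∀ x : ℝ, 1 ≤ x →
              ‖(1 / (2 * (Real.pi : ℂ))) *
                  ∫ t : ℝ, goldfeldF χ₁ χ₂ (t * I) * (x : ℂ) ^ (-(w : ℂ) + t * I) /
                    ((-(w : ℂ) + t * I) * (1 - (w : ℂ) + t * I) * (2 - (w : ℂ) + t * I) *
                      (3 - (w : ℂ) + t * I) * (4 - (w : ℂ) + t * I))‖ ≤
                C * ((q₁ * q₂ : ℕ) : ℝ) ^ (1 + ε) * x ^ (-w) / (w * (1 - w)) := by
  obtain ⟨C, hC, hbound⟩ := goldfeld_shifted_integral_bound_general ε hε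
  exact ⟨C, hC, fun q₁ q₂ hq₁ hq₂ χ₁ χ₂ _ _ _ _ _ _ w hw hw' x hx ↦
    @hbound q₁ q₂ ⟨by omega⟩ ⟨by omega⟩ χ₁ χ₂ w hw hw' x (by linarith)⟩
end
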